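/- Let k be a field, R a Dedekind domain containing k, and A an R-algebra. Suppose L is a finite separable field extension of k such that A ⊗_k L is isomorphic as an (R ⊗_k L)-algebra to a polynomial ring in two variables over R ⊗_k L. Then for every prime ideal p of R, the fiber A ⊗_R κ(p) is isomorphic as a κ(p)-algebra to a polynomial ring in two variables over κ(p); consequently A is an 𝔸²-fibration over R. -/

import Mathlib

/-!
The statement reduces to the theorem of Kambayashi that an algebra `B` over a field `K` which
becomes a polynomial ring in two variables over a finite Galois extension `K'` is already a
polynomial ring in two variables (`AffinePlane.nonempty_coordinateSystem_of_isGalois`). For a prime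
`p`, take `K = κ(p)`, `B = κ(p) ⊗ A`, and for `K'` the splitting field over `κ(p)` of the minimal
polynomial of a primitive element of `L / k`; since `R ⊗ L` maps to `K'`, the hypothesis gives
`K' ⊗ B ≅ K'[X₀, X₁]`. Finite generation and flatness of `A` descend along the free extension
`R → R ⊗ L`.

Kambayashi's theorem is proved with coordinate systems, the isomorphisms `K' ⊗ B ≅ K'[X₀, X₁]`, on
which the Galois group acts. Fix one variable and call a system minimal if the sum of the degrees of
the conjugates of this variable is least. Conjugates of minimal systems are minimal, and all minimal
systems have a common element of degree one (`AffinePlane.exists_totalDegree_eq_one_of_isMinimal`).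
Hence the space of elements of degree at most one in all minimal systems is Galois-stable and does
not consist of constants, and Galois descent yields a variable `b₁` in `B`. An automorphism fixing
the variable `X₁` is triangular, so the space of elements `a X₀ + p(X₁)` is also Galois-stable, and
a second descent yields `b₀` in `B` with `(b₀, b₁)` a coordinate system. The map `K[X₀, X₁] → B`
defined by `b₀, b₁` is bijective after base change to `K'`, hence bijective.

The existence of the common element is a convexity argument on degrees, the combinatorial content of
the tree attached to the automorphism group of the plane. It needs two facts about a plane
automorphism in arbitrary characteristic: the leading form of a coordinate contains a pure power of
one of the variables (`AffinePlane.exists_coeff_single_totalDegree_ne_zero`), and if both components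
have degree at least two, then the leading form of larger degree is a multiple of a power of the
other one (`AffinePlane.exists_totalDegree_sub_C_mul_pow_lt`). Both come from degenerating the
additive group action that fixes one coordinate and translates the other one: for every weight, this
gives a nontrivial deformation of the identity fixing the weighted leading form of the coordinate,
and hence all its factors. Such a deformation cannot fix both variables, nor a binomial
`X₀ ^ b - r X₁ ^ a` with `a, b ≥ 2` coprime, since all polynomial curves on its generic level curve
are constant (`AffinePlane.natDegree_eq_zero_of_generic_level_of_coprime`).
-/

set_option synthInstance.maxHeartbeats 1000000
set_option maxHeartbeats 1000000

open TensorProduct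

/-- The residue field `κ(p)` of a commutative ring at a prime ideal `p`. -/
noncomputable abbrev ResidueFieldAt {R : Type*} [CommRing R] (p : Ideal R) [p.IsPrime] :=
  IsLocalRing.ResidueField (Localization.AtPrime p)

/-- `A` is an `𝔸²`-fibration over `R`: a finitely generated flat `R`-algebra all of whose
fibers `A ⊗_R κ(p)` are polynomial rings in two variables over `κ(p)`. -/
def IsA2Fibration (R A : Type*) [CommRing R] [CommRing A] [Algebra R A] : Prop :=
  Algebra.FiniteType R A ∧ Module.Flat R A ∧
  ∀ (p : Ideal R) [p.IsPrime],
    Nonempty ((ResidueFieldAt p ⊗[R] A) ≃ₐ[ResidueFieldAt p]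
      MvPolynomial (Fin 2) (ResidueFieldAt p))

namespace AffinePlane

/-! ### Polynomial curves of Fermat type -/

section Curves

open Polynomial

variable {S : Type*} [CommRing S] [IsDomain S] {a b : ℕ}

lemma natDegree_right_eq_zero_of_C_mul_pow_add {u v P : S} (hv : v ≠ 0) (ha : a ≠ 0) {U V : S[X]}
    (h : C u * U ^ b + C v * V ^ a = C P) (hU : U.natDegree = 0) : V.natDegree = 0 := by
  have hV : C v * V ^ a = C (P - u * U.coeff 0 ^ b) := by
    rw [eq_C_of_natDegree_eq_zero hU] at h
    simp only [C_sub, C_mul, C_pow]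
    linear_combination h
  have hdeg := congrArg natDegree hV
  rw [natDegree_C_mul hv, natDegree_pow, natDegree_C] at hdeg
  exact (Nat.mul_eq_zero.1 hdeg).resolve_left ha

lemma natDegree_eq_zero_of_C_mul_pow_add {L : Type*} [Field L] (ha : 2 ≤ a) (hb : 2 ≤ b)
    (hab : a.Coprime b) (haL : (a : L) ≠ 0) (hbL : (b : L) ≠ 0) {u v P : L} (hu : u ≠ 0)
    (hv : v ≠ 0) (hP : P ≠ 0) {U V : L[X]} (h : C u * U ^ b + C v * V ^ a = C P) :
    U.natDegree = 0 := by
  rcases eq_or_ne U 0 with rfl | hU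
  · exact natDegree_zero
  rcases eq_or_ne V 0 with rfl | hV
  · exact natDegree_right_eq_zero_of_C_mul_pow_add hu (by omega) ((add_comm _ _).trans h)
      natDegree_zero
  have hcop : IsCoprime U V := by
    refine ⟨C (P⁻¹ * u) * U ^ (b - 1), C (P⁻¹ * v) * V ^ (a - 1), ?_⟩
    rw [mul_assoc, mul_assoc, pow_sub_one_mul (by omega), pow_sub_one_mul (by omega), C_mul, C_mul,
      mul_assoc, mul_assoc, ← mul_add, h, ← C_mul, inv_mul_cancel₀ hP, C_1]
  have hexp : a + b + 1 ≤ a * b := by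
    have hne : a ≠ b := by
      rintro rfl
      rw [Nat.coprime_self] at hab
      omega
    rcases hne.lt_or_gt with hlt | hlt <;> nlinarith
  refine (Polynomial.flt_catalan (r := a * b) (c := 1) (w := -P) (by omega) (by omega)
    (by positivity) ?_ hbL haL (by simp [haL, hbL]) hU hV one_ne_zero hcop hu hv
    (neg_ne_zero.2 hP) ?_).1
  · nlinarith [Nat.mul_le_mul_left (a * b) hexp]
  · rw [h, one_pow, mul_one, ← C_add, add_neg_cancel, C_0]

/-- A derivation kills the `a`-th power and turns the equation into `b u U ^ (b - 1) U' = D P`. -/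
lemma natDegree_eq_zero_of_derivation (D : Derivation ℤ S S) (ha : (a : S) = 0) (hb : 2 ≤ b)
    {u v P : S} (hu : D u = 0) (hv : D v = 0) (hP : D P ≠ 0) {U V : S[X]}
    (h : C u * U ^ b + C v * V ^ a = C P) : U.natDegree = 0 := by
  let _ : Differential S := ⟨D⟩
  have hC (s : S) : Differential.mapCoeffs (C s : S[X]) = C (D s) := Differential.mapCoeffs_C s
  have hder : C u * ((b : S[X]) * (U ^ (b - 1) * Differential.mapCoeffs U)) = C (D P) := by
    have ha' : (a : S[X]) = 0 := by rw [← C_eq_natCast, ha, C_0]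
    simpa [Derivation.leibniz, Derivation.leibniz_pow, hC, hu, hv, ha'] using
      congrArg (Differential.mapCoeffs (A := S)) h
  have hne : C u * ((b : S[X]) * (U ^ (b - 1) * Differential.mapCoeffs U)) ≠ 0 :=
    hder ▸ C_ne_zero.2 hP
  simp only [mul_ne_zero_iff] at hne
  obtain ⟨hu, hb', hU, hU'⟩ := hne
  have hdeg := congrArg natDegree hder
  rw [natDegree_C_mul (by simpa using hu), natDegree_mul hb' (mul_ne_zero hU hU'),
    natDegree_mul hU hU', natDegree_pow, natDegree_C] at hdeg
  have : (b - 1) * U.natDegree = 0 := by omega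
  exact (Nat.mul_eq_zero.1 this).resolve_left (by omega)

end Curves

section GenericLevelCurve

open MvPolynomial

variable {F σ : Type*} [Field F] {i j : σ} {a b : ℕ} {u v : F}
  {U V : Polynomial (MvPolynomial σ F)}

lemma natDegree_eq_zero_of_generic_level (hij : i ≠ j) (ha : 2 ≤ a) (hb : 2 ≤ b)
    (hab : a.Coprime b) (hbF : (b : F) ≠ 0) (hu : u ≠ 0) (hv : v ≠ 0)
    (h : Polynomial.C (C u) * U ^ b + Polynomial.C (C v) * V ^ a =
      Polynomial.C (C u * X i ^ b + C v * X j ^ a)) : U.natDegree = 0 := by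
  have hP : pderiv i (C u * X i ^ b + C v * X j ^ a) = C (u * b) * X i ^ (b - 1) := by
    simp [Derivation.leibniz_pow, pderiv_X_of_ne hij.symm, mul_assoc]
  have hP0 : pderiv i (C u * X i ^ b + C v * X j ^ a) ≠ 0 := by
    rw [hP]
    exact mul_ne_zero (C_ne_zero.2 (mul_ne_zero hu hbF)) (pow_ne_zero _ (X_ne_zero i))
  by_cases haF : (a : F) = 0
  · refine natDegree_eq_zero_of_derivation ((pderiv i).restrictScalars ℤ) ?_ hb pderiv_C
      pderiv_C hP0 h
    rw [← map_natCast C, haF, C_0]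
  · let Q := FractionRing (MvPolynomial σ F)
    have hι : Function.Injective (algebraMap (MvPolynomial σ F) Q) := IsFractionRing.injective _ _
    have hcast {n : ℕ} (hn : (n : F) ≠ 0) : (n : Q) ≠ 0 := by
      rw [← map_natCast (algebraMap (MvPolynomial σ F) Q), map_ne_zero_iff _ hι,
        ← map_natCast C]
      exact C_ne_zero.2 hn
    have hQ := congrArg (Polynomial.map (algebraMap (MvPolynomial σ F) Q)) h
    rw [Polynomial.map_add, Polynomial.map_mul, Polynomial.map_mul, Polynomial.map_pow,
      Polynomial.map_pow, Polynomial.map_C, Polynomial.map_C, Polynomial.map_C] at hQ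
    rw [← Polynomial.natDegree_map_eq_of_injective hι]
    refine natDegree_eq_zero_of_C_mul_pow_add ha hb hab (hcast haF) (hcast hbF) ?_ ?_ ?_ hQ <;>
      rw [map_ne_zero_iff _ hι]
    exacts [C_ne_zero.2 hu, C_ne_zero.2 hv, fun h0 => hP0 (by rw [h0, map_zero])]

/-- `a` and `b` are not both zero in `F`, and their roles can be exchanged. -/
lemma natDegree_eq_zero_of_generic_level_of_coprime (hij : i ≠ j) (ha : 2 ≤ a) (hb : 2 ≤ b)
    (hab : a.Coprime b) (hu : u ≠ 0) (hv : v ≠ 0)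
    (h : Polynomial.C (C u) * U ^ b + Polynomial.C (C v) * V ^ a =
      Polynomial.C (C u * X i ^ b + C v * X j ^ a)) :
    U.natDegree = 0 ∧ V.natDegree = 0 := by
  have hswap : Polynomial.C (C v) * V ^ a + Polynomial.C (C u) * U ^ b =
      Polynomial.C (C v * X j ^ a + C u * X i ^ b) := by rw [add_comm, h, add_comm]
  by_cases hbF : (b : F) = 0
  · have haF : (a : F) ≠ 0 := fun haF => by
      have hcop : IsCoprime (a : F) (b : F) := hab.cast
      rw [haF, hbF] at hcop
      exact not_isCoprime_zero_zero hcop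
    have hV := natDegree_eq_zero_of_generic_level hij.symm hb ha hab.symm haF hv hu hswap
    exact ⟨natDegree_right_eq_zero_of_C_mul_pow_add (C_ne_zero.2 hu) (by omega) hswap hV, hV⟩
  · have hU := natDegree_eq_zero_of_generic_level hij ha hb hab hbF hu hv h
    exact ⟨hU, natDegree_right_eq_zero_of_C_mul_pow_add (C_ne_zero.2 hv) (by omega) h hU⟩

end GenericLevelCurve

open MvPolynomial

/-! ### Weighted degrees and substitution -/

section WeightedDegree

variable {σ κ R M : Type*} [CommSemiring R] [AddCommMonoid M] [LinearOrder M]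
  {w : σ → M} {v : κ → M} {a b d e : M} {p q : MvPolynomial σ R}

/-- The polynomials all of whose monomials have `w`-weight at most `d`. In contrast to
`weightedTotalDegree`, weights of arbitrary sign are allowed. -/
noncomputable def weightedDegreeLE (R : Type*) [CommSemiring R] (w : σ → M) (d : M) :
    Submodule R (MvPolynomial σ R) :=
  restrictSupport R {m | Finsupp.weight w m ≤ d}

lemma mem_weightedDegreeLE :
    p ∈ weightedDegreeLE R w d ↔ ∀ m, p.coeff m ≠ 0 → Finsupp.weight w m ≤ d := by
  simp [weightedDegreeLE, mem_restrictSupport_iff, Set.subset_def]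

lemma weightedDegreeLE_mono (h : d ≤ e) : weightedDegreeLE R w d ≤ weightedDegreeLE R w e :=
  restrictSupport_mono R fun _ hm => le_trans hm h

lemma weightedHomogeneousComponent_eq_zero_of_mem (hp : p ∈ weightedDegreeLE R w d) (h : d < e) :
    weightedHomogeneousComponent w e p = 0 :=
  weightedHomogeneousComponent_eq_zero' _ _ fun m hm =>
    ((mem_weightedDegreeLE.1 hp m (mem_support_iff.1 hm)).trans_lt h).ne

lemma one_mem_weightedDegreeLE : (1 : MvPolynomial σ R) ∈ weightedDegreeLE R w 0 :=
  (monomial_mem_restrictSupport R).2 (Or.inl (by simp))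

variable [IsOrderedCancelAddMonoid M]

lemma mul_mem_weightedDegreeLE (hp : p ∈ weightedDegreeLE R w a)
    (hq : q ∈ weightedDegreeLE R w b) : p * q ∈ weightedDegreeLE R w (a + b) := by
  classical
  rw [mem_weightedDegreeLE] at *
  intro m hm
  rw [coeff_mul] at hm
  obtain ⟨x, hx, hne⟩ := Finset.exists_ne_zero_of_sum_ne_zero hm
  rw [← Finset.HasAntidiagonal.mem_antidiagonal.1 hx, map_add]
  exact add_le_add (hp _ (left_ne_zero_of_mul hne)) (hq _ (right_ne_zero_of_mul hne))

lemma weightedHomogeneousComponent_mul (hp : p ∈ weightedDegreeLE R w a)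
    (hq : q ∈ weightedDegreeLE R w b) : weightedHomogeneousComponent w (a + b) (p * q) =
      weightedHomogeneousComponent w a p * weightedHomogeneousComponent w b q := by
  classical
  rw [mem_weightedDegreeLE] at hp hq
  ext m
  rw [coeff_weightedHomogeneousComponent, coeff_mul, coeff_mul, ← Finset.sum_const_zero,
    ← Finset.sum_ite_irrel]
  refine Finset.sum_congr rfl fun x hx => ?_
  rw [coeff_weightedHomogeneousComponent, coeff_weightedHomogeneousComponent,
    ← Finset.HasAntidiagonal.mem_antidiagonal.1 hx, map_add]
  by_cases hpx : p.coeff x.1 = 0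
  · simp [hpx]
  by_cases hqx : q.coeff x.2 = 0
  · simp [hqx]
  simp only [add_eq_add_iff_eq_and_eq (hp _ hpx) (hq _ hqx), ite_and, mul_ite, ite_mul, zero_mul,
    mul_zero]
  split_ifs <;> rfl

lemma pow_mem_weightedDegreeLE (hp : p ∈ weightedDegreeLE R w a) (n : ℕ) :
    p ^ n ∈ weightedDegreeLE R w (n • a) := by
  induction n with
  | zero => simpa using one_mem_weightedDegreeLE
  | succ n ih => simpa only [pow_succ, succ_nsmul] using mul_mem_weightedDegreeLE ih hp

lemma weightedHomogeneousComponent_pow (hp : p ∈ weightedDegreeLE R w a) (n : ℕ) :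
    weightedHomogeneousComponent w (n • a) (p ^ n) = weightedHomogeneousComponent w a p ^ n := by
  induction n with
  | zero => simpa using (isWeightedHomogeneous_one R w).weightedHomogeneousComponent_same
  | succ n ih =>
    rw [succ_nsmul, pow_succ, pow_succ,
      weightedHomogeneousComponent_mul (pow_mem_weightedDegreeLE hp n) hp, ih]

variable {g : κ → MvPolynomial σ R}

lemma prod_pow_mem_weightedDegreeLE (hg : ∀ i, g i ∈ weightedDegreeLE R w (v i)) (m : κ →₀ ℕ) :
    (m.prod fun i n => g i ^ n) ∈ weightedDegreeLE R w (Finsupp.weight v m) := by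
  induction m using Finsupp.induction_linear with
  | zero => simpa using one_mem_weightedDegreeLE
  | add m m' hm hm' =>
    rw [map_add, Finsupp.prod_add_index' (by simp) (by simp [pow_add])]
    exact mul_mem_weightedDegreeLE hm hm'
  | single i n => simpa [Finsupp.weight_single] using pow_mem_weightedDegreeLE (hg i) n

lemma weightedHomogeneousComponent_prod_pow (hg : ∀ i, g i ∈ weightedDegreeLE R w (v i))
    (m : κ →₀ ℕ) :
    weightedHomogeneousComponent w (Finsupp.weight v m) (m.prod fun i n => g i ^ n) =
      m.prod fun i n => weightedHomogeneousComponent w (v i) (g i) ^ n := by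
  induction m using Finsupp.induction_linear with
  | zero => simpa using (isWeightedHomogeneous_one R w).weightedHomogeneousComponent_same
  | add m m' hm hm' =>
    rw [map_add, Finsupp.prod_add_index' (by simp) (by simp [pow_add]),
      Finsupp.prod_add_index' (by simp) (by simp [pow_add]),
      weightedHomogeneousComponent_mul (prod_pow_mem_weightedDegreeLE hg m)
        (prod_pow_mem_weightedDegreeLE hg m'), hm, hm']
  | single i n =>
    simpa [Finsupp.weight_single] using weightedHomogeneousComponent_pow (hg i) n

lemma aeval_mem_weightedDegreeLE (hg : ∀ i, g i ∈ weightedDegreeLE R w (v i))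
    {q : MvPolynomial κ R} (hq : q ∈ weightedDegreeLE R v d) :
    aeval g q ∈ weightedDegreeLE R w d := by
  suffices weightedDegreeLE R v d ≤ (weightedDegreeLE R w d).comap (aeval g).toLinearMap from
    this hq
  rw [weightedDegreeLE, restrictSupport_eq_span, Submodule.span_le]
  rintro _ ⟨m, hm, rfl⟩
  simpa only [SetLike.mem_coe, Submodule.mem_comap, AlgHom.toLinearMap_apply, aeval_monomial,
    map_one, one_mul] using weightedDegreeLE_mono hm (prod_pow_mem_weightedDegreeLE hg m)

lemma weightedHomogeneousComponent_aeval (hg : ∀ i, g i ∈ weightedDegreeLE R w (v i))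
    {q : MvPolynomial κ R} (hq : q ∈ weightedDegreeLE R v d) :
    weightedHomogeneousComponent w d (aeval g q) =
      aeval (fun i => weightedHomogeneousComponent w (v i) (g i))
        (weightedHomogeneousComponent v d q) := by
  rw [weightedDegreeLE, restrictSupport_eq_span] at hq
  refine LinearMap.eqOn_span (f := weightedHomogeneousComponent w d ∘ₗ (aeval g).toLinearMap)
    (g := (aeval fun i => weightedHomogeneousComponent w (v i) (g i)).toLinearMap ∘ₗ
      weightedHomogeneousComponent v d) ?_ hq
  rintro _ ⟨m, hm, rfl⟩
  have hmono := isWeightedHomogeneous_monomial v m (1 : R) rfl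
  simp only [LinearMap.comp_apply, AlgHom.toLinearMap_apply, aeval_monomial, map_one, one_mul]
  rcases (show Finsupp.weight v m ≤ d from hm).eq_or_lt with rfl | hlt
  · rw [hmono.weightedHomogeneousComponent_same, aeval_monomial, map_one, one_mul,
      weightedHomogeneousComponent_prod_pow hg]
  · rw [hmono.weightedHomogeneousComponent_ne d hlt.ne', map_zero,
      weightedHomogeneousComponent_eq_zero_of_mem (prod_pow_mem_weightedDegreeLE hg m) hlt]

end WeightedDegree

/-! ### Leading forms -/

section LeadingForm

variable {σ κ R : Type*} [CommSemiring R] {p : MvPolynomial σ R} {w : σ → ℕ}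

/-- The part of `p` of highest weight with respect to the weights `w` of the variables. -/
noncomputable def weightedLeadingForm (w : σ → ℕ) (p : MvPolynomial σ R) : MvPolynomial σ R :=
  weightedHomogeneousComponent w (weightedTotalDegree w p) p

/-- The part of `p` of highest total degree. -/
noncomputable def leadingForm (p : MvPolynomial σ R) : MvPolynomial σ R :=
  weightedLeadingForm 1 p

lemma isWeightedHomogeneous_weightedLeadingForm (w : σ → ℕ) (p : MvPolynomial σ R) :
    IsWeightedHomogeneous w (weightedLeadingForm w p) (weightedTotalDegree w p) :=
  weightedHomogeneousComponent_isWeightedHomogeneous _ p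

lemma mem_weightedDegreeLE_iff_weightedTotalDegree_le {d : ℕ} :
    p ∈ weightedDegreeLE R w d ↔ weightedTotalDegree w p ≤ d := by
  simp [mem_weightedDegreeLE, weightedTotalDegree]

lemma mem_weightedDegreeLE_one_iff_totalDegree_le {d : ℕ} :
    p ∈ weightedDegreeLE R (1 : σ → ℕ) d ↔ p.totalDegree ≤ d := by
  rw [mem_weightedDegreeLE_iff_weightedTotalDegree_le, weightedTotalDegree_one]

lemma leadingForm_eq : leadingForm p = homogeneousComponent p.totalDegree p := by
  rw [leadingForm, weightedLeadingForm, weightedTotalDegree_one, homogeneousComponent]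

lemma weightedLeadingForm_ne_zero (hp : p ≠ 0) : weightedLeadingForm w p ≠ 0 := by
  obtain ⟨m, hm, hmax⟩ := p.support.exists_mem_eq_sup (by simpa using hp) (Finsupp.weight w)
  refine ne_zero_iff.2 ⟨m, ?_⟩
  rw [weightedLeadingForm, coeff_weightedHomogeneousComponent, weightedTotalDegree,
    if_pos hmax.symm]
  exact mem_support_iff.1 hm

lemma leadingForm_ne_zero (hp : p ≠ 0) : leadingForm p ≠ 0 := weightedLeadingForm_ne_zero hp

lemma degree_eq_of_coeff_leadingForm_ne_zero {m : σ →₀ ℕ} (h : (leadingForm p).coeff m ≠ 0) :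
    m.degree = p.totalDegree := by
  rw [leadingForm_eq, coeff_homogeneousComponent] at h
  exact (ite_ne_right_iff.1 h).1

lemma coeff_ne_zero_of_coeff_leadingForm_ne_zero {m : σ →₀ ℕ}
    (h : (leadingForm p).coeff m ≠ 0) : p.coeff m ≠ 0 := by
  rw [leadingForm_eq, coeff_homogeneousComponent] at h
  exact (ite_ne_right_iff.1 h).2

lemma totalDegree_leadingForm (hp : p ≠ 0) : (leadingForm p).totalDegree = p.totalDegree :=
  (leadingForm_eq (p := p) ▸ homogeneousComponent_isHomogeneous _ p).totalDegree
    (leadingForm_ne_zero hp)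

lemma totalDegree_lt_of_homogeneousComponent_eq_zero {d : ℕ} (hd : 0 < d)
    (hle : p.totalDegree ≤ d) (h : homogeneousComponent d p = 0) : p.totalDegree < d := by
  refine hle.lt_of_ne fun heq => ?_
  rw [← heq, ← leadingForm_eq] at h
  have hp : p = 0 := by_contra fun hne => leadingForm_ne_zero hne h
  rw [hp, totalDegree_zero] at heq
  omega

lemma homogeneousComponent_mul_totalDegree_pow (p : MvPolynomial σ R) (n : ℕ) :
    homogeneousComponent (n * p.totalDegree) (p ^ n) = leadingForm p ^ n := by
  rw [leadingForm_eq]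
  exact weightedHomogeneousComponent_pow (mem_weightedDegreeLE_one_iff_totalDegree_le.2 le_rfl) n

lemma totalDegree_pow_of_isDomain {R : Type*} [CommRing R] [IsDomain R] {p : MvPolynomial σ R}
    (hp : p ≠ 0) (n : ℕ) : (p ^ n).totalDegree = n * p.totalDegree := by
  induction n with
  | zero => simp
  | succ n ih => rw [pow_succ, totalDegree_mul_of_isDomain (pow_ne_zero n hp) hp, ih, add_one_mul]

lemma totalDegree_aeval_le_of_totalDegree_le_one {g : κ → MvPolynomial σ R}
    (hg : ∀ i, (g i).totalDegree ≤ 1) (q : MvPolynomial κ R) :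
    (aeval g q).totalDegree ≤ q.totalDegree :=
  mem_weightedDegreeLE_one_iff_totalDegree_le.1 <|
    aeval_mem_weightedDegreeLE (v := 1)
      (fun i => mem_weightedDegreeLE_one_iff_totalDegree_le.2 (hg i))
      (mem_weightedDegreeLE_one_iff_totalDegree_le.2 le_rfl)

variable (g : κ → MvPolynomial σ R) {q : MvPolynomial κ R}

lemma totalDegree_aeval_le_weightedTotalDegree :
    (aeval g q).totalDegree ≤ weightedTotalDegree (fun i => (g i).totalDegree) q :=
  mem_weightedDegreeLE_one_iff_totalDegree_le.1 <|
    aeval_mem_weightedDegreeLE (fun _ => mem_weightedDegreeLE_one_iff_totalDegree_le.2 le_rfl)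
      (mem_weightedDegreeLE_iff_weightedTotalDegree_le.2 le_rfl)

lemma homogeneousComponent_aeval :
    homogeneousComponent (weightedTotalDegree (fun i => (g i).totalDegree) q) (aeval g q) =
      aeval (fun i => leadingForm (g i))
        (weightedLeadingForm (fun i => (g i).totalDegree) q) := by
  simp only [leadingForm_eq]
  exact weightedHomogeneousComponent_aeval
    (fun _ => mem_weightedDegreeLE_one_iff_totalDegree_le.2 le_rfl)
    (mem_weightedDegreeLE_iff_weightedTotalDegree_le.2 le_rfl)

lemma aeval_leadingForm_eq_zero_of_totalDegree_lt
    (h : (aeval g q).totalDegree < weightedTotalDegree (fun i => (g i).totalDegree) q) :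
    aeval (fun i => leadingForm (g i))
      (weightedLeadingForm (fun i => (g i).totalDegree) q) = 0 := by
  rw [← homogeneousComponent_aeval, homogeneousComponent_eq_zero _ _ h]

end LeadingForm

/-! ### Deformations of the identity and their degenerations -/

section Deformation

variable {F S : Type*} [CommSemiring F] [CommRing S] [Algebra F S]

/-- An algebra homomorphism `S → S[t]`, thought of as a family of endomorphisms of `S` with
parameter `t`, which is the identity at `t = 0`. It is trivial if it is `Polynomial.CAlgHom`. -/
def IsDeformation (ψ : S →ₐ[F] Polynomial S) : Prop :=
  ∀ p, (ψ p).coeff 0 = p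

namespace IsDeformation

variable {ψ : S →ₐ[F] Polynomial S} {p q : S}

lemma eq_C_of_natDegree_eq_zero (hψ : IsDeformation ψ) (hp : (ψ p).natDegree = 0) :
    ψ p = Polynomial.C p := by
  rw [Polynomial.eq_C_of_natDegree_eq_zero hp, hψ]

lemma eq_C_of_dvd [IsDomain S] (hψ : IsDeformation ψ) (hq : q ≠ 0) (hψq : ψ q = Polynomial.C q)
    (hpq : p ∣ q) : ψ p = Polynomial.C p := by
  refine hψ.eq_C_of_natDegree_eq_zero (Nat.eq_zero_of_le_zero ?_)
  simpa only [hψq, Polynomial.natDegree_C] using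
    Polynomial.natDegree_le_of_dvd (map_dvd ψ hpq) (by simpa [hψq] using hq)

end IsDeformation

lemma isDeformation_iff_coeff_zero_X {σ : Type*} {F : Type*} [CommRing F]
    {ψ : MvPolynomial σ F →ₐ[F] Polynomial (MvPolynomial σ F)} :
    IsDeformation ψ ↔ ∀ i, (ψ (X i)).coeff 0 = X i := by
  refine ⟨fun h i => h _, fun h p => ?_⟩
  let coeffZero : Polynomial (MvPolynomial σ F) →ₐ[F] MvPolynomial σ F :=
    (Polynomial.aeval (0 : MvPolynomial σ F)).restrictScalars F
  have hid : coeffZero.comp ψ = AlgHom.id F _ :=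
    MvPolynomial.algHom_ext fun i => by
      simpa [coeffZero, Polynomial.coeff_zero_eq_aeval_zero] using h i
  simpa [coeffZero, Polynomial.coeff_zero_eq_aeval_zero] using DFunLike.congr_fun hid p

end Deformation

section Translation

variable {F A : Type*} [CommRing F] [CommRing A] [Algebra F A]

/-- The action of the additive group attached to a coordinate system `e`: it fixes `e X₀` and
translates `e X₁` by the parameter. -/
noncomputable def translation (e : MvPolynomial (Fin 2) F ≃ₐ[F] A) : A →ₐ[F] Polynomial A :=
  (aeval ![Polynomial.C (e (X 0)), Polynomial.C (e (X 1)) + Polynomial.X]).comp e.symm.toAlgHom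

variable (e : MvPolynomial (Fin 2) F ≃ₐ[F] A)

lemma translation_X_zero : translation e (e (X 0)) = Polynomial.C (e (X 0)) := by
  simp [translation]

lemma translation_X_one : translation e (e (X 1)) = Polynomial.C (e (X 1)) + Polynomial.X := by
  simp [translation]

lemma isDeformation_translation : IsDeformation (translation e) := by
  let coeffZero : Polynomial A →ₐ[F] A := (Polynomial.aeval (0 : A)).restrictScalars F
  have hcoeff (p : Polynomial A) : coeffZero p = p.coeff 0 :=
    (Polynomial.coeff_zero_eq_aeval_zero p).symm
  have hid : (coeffZero.comp (translation e)).comp e.toAlgHom = e.toAlgHom := by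
    refine MvPolynomial.algHom_ext fun i => ?_
    fin_cases i
    · simp [hcoeff, translation_X_zero]
    · simp [hcoeff, translation_X_one]
  intro p
  simpa [hcoeff] using DFunLike.congr_fun hid (e.symm p)

lemma translation_ne_CAlgHom [Nontrivial A] : translation e ≠ Polynomial.CAlgHom := by
  intro h
  have hX := translation_X_one e
  rw [h, Polynomial.CAlgHom_apply, left_eq_add] at hX
  exact Polynomial.X_ne_zero hX

end Translation

section Degeneration

variable {F : Type*} [Field F] {n : ℕ}

lemma weight_finCons (τ : ℚ) (w : Fin n → ℚ) (m : Fin (n + 1) →₀ ℕ) :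
    Finsupp.weight (Fin.cons τ w : Fin (n + 1) → ℚ) m = m 0 * τ + Finsupp.weight w m.tail := by
  simp [Finsupp.weight_eq_sum, Fin.sum_univ_succ, Finsupp.tail_apply]

/-- The weight of the new variable is the smallest slope at which a monomial reaches the bound. -/
lemma exists_weight_finCons_le {ι : Type*} [Finite ι] (P : ι → MvPolynomial (Fin (n + 1)) F)
    (w : Fin n → ℚ) (v : ι → ℚ) (hP : ∃ k, ∃ m ∈ (P k).support, m 0 ≠ 0) :
    ∃ τ : ℚ, (∀ k, ∀ m ∈ (P k).support, m 0 ≠ 0 →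
        Finsupp.weight (Fin.cons τ w : Fin (n + 1) → ℚ) m ≤ v k) ∧
      ∃ k, ∃ m ∈ (P k).support, m 0 ≠ 0 ∧
        Finsupp.weight (Fin.cons τ w : Fin (n + 1) → ℚ) m = v k := by
  have := Fintype.ofFinite ι
  let T : Finset (Σ _ : ι, Fin (n + 1) →₀ ℕ) :=
    Finset.univ.sigma fun k => (P k).support.filter fun m => m 0 ≠ 0
  have mem_T {k : ι} {m : Fin (n + 1) →₀ ℕ} : ⟨k, m⟩ ∈ T ↔ m ∈ (P k).support ∧ m 0 ≠ 0 := by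
    simp only [T, Finset.mem_sigma, Finset.mem_univ, true_and, Finset.mem_filter]
  let slope : (Σ _ : ι, Fin (n + 1) →₀ ℕ) → ℚ := fun x =>
    (v x.1 - Finsupp.weight w x.2.tail) / x.2 0
  have hT : T.Nonempty := let ⟨k, m, hm⟩ := hP; ⟨⟨k, m⟩, mem_T.2 hm⟩
  obtain ⟨⟨k₀, m₀⟩, hmem, hmin⟩ := T.exists_min_image slope hT
  have cast_pos {m : Fin (n + 1) →₀ ℕ} (h : m 0 ≠ 0) : (0 : ℚ) < m 0 :=
    Nat.cast_pos.2 (Nat.pos_of_ne_zero h)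
  obtain ⟨hm₀, hm₀'⟩ := mem_T.1 hmem
  refine ⟨slope ⟨k₀, m₀⟩, fun k m hm hm0 => ?_, k₀, m₀, hm₀, hm₀', ?_⟩
  · have hle := (le_div_iff₀ (cast_pos hm0)).1 (hmin ⟨k, m⟩ (mem_T.2 ⟨hm, hm0⟩))
    rw [weight_finCons]
    linarith
  · rw [weight_finCons, mul_div_cancel₀ _ (cast_pos hm₀').ne', sub_add_cancel]

variable (φ : MvPolynomial (Fin n) F →ₐ[F] Polynomial (MvPolynomial (Fin n) F)) (τ : ℚ)
  (w : Fin n → ℚ)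

/-- The family `φ` does not raise the weights `w` of the variables, when the parameter is given the
weight `τ` and is made the first variable through `finSuccEquiv`. -/
def IsFiltered : Prop :=
  ∀ k, (finSuccEquiv F n).symm (φ (X k)) ∈
    weightedDegreeLE F (Fin.cons τ w : Fin (n + 1) → ℚ) (w k)

/-- The part of a family of endomorphisms that preserves weights, when the parameter is given the
weight `τ` and is made the first variable through `finSuccEquiv`. -/
noncomputable def degeneration : MvPolynomial (Fin n) F →ₐ[F] Polynomial (MvPolynomial (Fin n) F) :=
  (finSuccEquiv F n).toAlgHom.comp <| aeval fun k =>
    weightedHomogeneousComponent (Fin.cons τ w : Fin (n + 1) → ℚ) (w k)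
      ((finSuccEquiv F n).symm (φ (X k)))

variable {φ τ w}

lemma coeff_degeneration_weightedHomogeneousComponent (hφ : IsFiltered φ τ w) {d : ℚ}
    {f : MvPolynomial (Fin n) F} (hf : f ∈ weightedDegreeLE F w d) (i : ℕ) :
    (degeneration φ τ w (weightedHomogeneousComponent w d f)).coeff i =
      weightedHomogeneousComponent w (d - i * τ) ((φ f).coeff i) := by
  have haeval : aeval (fun k => (finSuccEquiv F n).symm (φ (X k))) f =
      (finSuccEquiv F n).symm (φ f) :=
    (DFunLike.congr_fun (aeval_unique ((finSuccEquiv F n).symm.toAlgHom.comp φ)) f).symm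
  have hcomp := weightedHomogeneousComponent_aeval hφ hf
  rw [haeval] at hcomp
  ext m
  rw [degeneration, AlgHom.comp_apply, ← hcomp, AlgEquiv.toAlgHom_apply,
    finSuccEquiv_coeff_coeff]
  rw [coeff_weightedHomogeneousComponent, coeff_weightedHomogeneousComponent, weight_finCons,
    Finsupp.cons_zero, Finsupp.tail_cons, ← finSuccEquiv_coeff_coeff, AlgEquiv.apply_symm_apply]
  simp only [eq_sub_iff_add_eq']

lemma degeneration_eq_C {d : ℚ} {f : MvPolynomial (Fin n) F} (hφ : IsFiltered φ τ w)
    (hf : f ∈ weightedDegreeLE F w d) (hφf : φ f = Polynomial.C f) :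
    degeneration φ τ w (weightedHomogeneousComponent w d f) =
      Polynomial.C (weightedHomogeneousComponent w d f) := by
  ext1 i
  rw [coeff_degeneration_weightedHomogeneousComponent hφ hf, hφf, Polynomial.coeff_C,
    Polynomial.coeff_C]
  split_ifs with hi
  · simp [hi]
  · exact map_zero _

lemma X_mem_weightedDegreeLE (k : Fin n) : (X k : MvPolynomial (Fin n) F) ∈
    weightedDegreeLE F w (w k) :=
  (monomial_mem_restrictSupport F).2 (Or.inl (by simp [Finsupp.weight_single]))

lemma coeff_degeneration_X (hφ : IsFiltered φ τ w) (k : Fin n) (i : ℕ) :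
    (degeneration φ τ w (X k)).coeff i =
      weightedHomogeneousComponent w (w k - i * τ) ((φ (X k)).coeff i) := by
  rw [← coeff_degeneration_weightedHomogeneousComponent hφ (X_mem_weightedDegreeLE k),
    (isWeightedHomogeneous_X F w k).weightedHomogeneousComponent_same]

lemma isDeformation_degeneration (hφ : IsFiltered φ τ w) (hdef : IsDeformation φ) :
    IsDeformation (degeneration φ τ w) := by
  refine isDeformation_iff_coeff_zero_X.2 fun k => ?_
  rw [coeff_degeneration_X hφ, hdef, Nat.cast_zero, zero_mul, sub_zero,
    (isWeightedHomogeneous_X F w k).weightedHomogeneousComponent_same]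

lemma IsDeformation.exists_mem_support_ne_zero (hdef : IsDeformation φ)
    (hne : φ ≠ Polynomial.CAlgHom) :
    ∃ k, ∃ m ∈ ((finSuccEquiv F n).symm (φ (X k))).support, m 0 ≠ 0 := by
  by_contra! hzero
  refine hne (MvPolynomial.algHom_ext fun k => hdef.eq_C_of_natDegree_eq_zero ?_)
  rw [← (finSuccEquiv F n).apply_symm_apply (φ (X k)), natDegree_finSuccEquiv]
  exact Nat.eq_zero_of_le_zero (degreeOf_le_iff.2 fun m hm => (hzero k m hm).le)

lemma IsDeformation.exists_isFiltered_and_degeneration_ne_CAlgHom (hdef : IsDeformation φ)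
    (hne : φ ≠ Polynomial.CAlgHom) (w : Fin n → ℚ) :
    ∃ τ : ℚ, IsFiltered φ τ w ∧ degeneration φ τ w ≠ Polynomial.CAlgHom := by
  obtain ⟨τ, hle, k, m, hm, hm0, heq⟩ :=
    exists_weight_finCons_le _ w w (hdef.exists_mem_support_ne_zero hne)
  have hφ : IsFiltered φ τ w := by
    refine fun k => mem_weightedDegreeLE.2 fun m hm => ?_
    by_cases hm0 : m 0 = 0
    · rw [← Finsupp.cons_tail m, hm0, ← finSuccEquiv_coeff_coeff, AlgEquiv.apply_symm_apply,
        hdef] at hm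
      rw [weight_finCons, hm0, Nat.cast_zero, zero_mul, zero_add]
      exact mem_weightedDegreeLE.1 (X_mem_weightedDegreeLE k) _ hm
    · exact hle k m (mem_support_iff.2 hm) hm0
  refine ⟨τ, hφ, fun h => ?_⟩
  have hcoeff := congrArg (coeff m.tail) (coeff_degeneration_X hφ k (m 0))
  rw [h, Polynomial.CAlgHom_apply, Polynomial.coeff_C_of_ne_zero hm0, coeff_zero,
    coeff_weightedHomogeneousComponent, if_pos (eq_sub_of_add_eq' (by rw [← heq, weight_finCons])),
    ← (finSuccEquiv F n).apply_symm_apply (φ (X k)), finSuccEquiv_coeff_coeff,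
    Finsupp.cons_tail] at hcoeff
  exact mem_support_iff.1 hm hcoeff.symm

lemma weightedHomogeneousComponent_natCast {σ : Type*} (w : σ → ℕ) (d : ℕ)
    (p : MvPolynomial σ F) :
    weightedHomogeneousComponent (fun i => (w i : ℚ)) (d : ℚ) p =
      weightedHomogeneousComponent w d p := by
  ext m
  have hcast : Finsupp.weight (fun i => (w i : ℚ)) m = (Finsupp.weight w m : ℕ) := by
    simp [Finsupp.weight_apply, Finsupp.sum]
  rw [coeff_weightedHomogeneousComponent, coeff_weightedHomogeneousComponent, hcast]
  simp only [Nat.cast_inj]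

lemma mem_weightedDegreeLE_natCast {σ : Type*} (w : σ → ℕ) (p : MvPolynomial σ F) :
    p ∈ weightedDegreeLE F (fun i => (w i : ℚ)) (weightedTotalDegree w p : ℕ) := by
  refine mem_weightedDegreeLE.2 fun m hm => ?_
  have hcast : Finsupp.weight (fun i => (w i : ℚ)) m = (Finsupp.weight w m : ℕ) := by
    simp [Finsupp.weight_apply, Finsupp.sum]
  rw [hcast, Nat.cast_le]
  exact le_weightedTotalDegree w (mem_support_iff.2 hm)

lemma IsDeformation.exists_fixing_weightedLeadingForm (hdef : IsDeformation φ)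
    (hne : φ ≠ Polynomial.CAlgHom) (w : Fin n → ℕ) :
    ∃ ψ : MvPolynomial (Fin n) F →ₐ[F] Polynomial (MvPolynomial (Fin n) F),
      IsDeformation ψ ∧ ψ ≠ Polynomial.CAlgHom ∧ ∀ f, φ f = Polynomial.C f →
        ψ (weightedLeadingForm w f) = Polynomial.C (weightedLeadingForm w f) := by
  obtain ⟨τ, hφ, hne'⟩ := hdef.exists_isFiltered_and_degeneration_ne_CAlgHom hne fun i => (w i : ℚ)
  refine ⟨_, isDeformation_degeneration hφ hdef, hne', fun f hf => ?_⟩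
  rw [weightedLeadingForm, ← weightedHomogeneousComponent_natCast]
  exact degeneration_eq_C hφ (mem_weightedDegreeLE_natCast w f) hf

end Degeneration

/-! ### Leading forms of coordinates in the plane -/

section PurePower

variable {F : Type*} [Field F]

lemma eq_single_of_degree_eq {i j : Fin 2} (hij : i ≠ j) {m : Fin 2 →₀ ℕ} (h : m i = 0) :
    m = Finsupp.single j m.degree := by
  have hm : m.degree = m j := by
    rw [Finsupp.degree_eq_sum, Fintype.sum_eq_single j fun k hk => by rwa [show k = i by omega]]
  rw [hm]
  ext k
  obtain rfl | rfl : k = i ∨ k = j := by omega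
  · rw [h, Finsupp.single_eq_of_ne hij]
  · rw [Finsupp.single_eq_same]

/-- Otherwise both variables divide the leading form, so that a nontrivial deformation which fixes
the leading form would fix both variables. -/
lemma exists_coeff_single_totalDegree_ne_zero
    (e : MvPolynomial (Fin 2) F ≃ₐ[F] MvPolynomial (Fin 2) F) :
    ∃ i, (e (X 0)).coeff (Finsupp.single i (e (X 0)).totalDegree) ≠ 0 := by
  by_contra! hzero
  have hf : leadingForm (e (X 0)) ≠ 0 := leadingForm_ne_zero (by simp)
  obtain ⟨ψ, hψ, hne, hfix⟩ :=
    (isDeformation_translation e).exists_fixing_weightedLeadingForm (translation_ne_CAlgHom e) 1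
  refine hne (MvPolynomial.algHom_ext fun i =>
    hψ.eq_C_of_dvd hf (hfix _ (translation_X_zero e)) ?_)
  obtain ⟨j, hij⟩ := exists_ne i
  rw [← Ideal.mem_span_singleton, ← Set.image_singleton (f := X), mem_ideal_span_X_image]
  refine fun m hm => ⟨i, rfl, fun hmi => ?_⟩
  have hm := mem_support_iff.1 hm
  refine coeff_ne_zero_of_coeff_leadingForm_ne_zero hm ?_
  rw [eq_single_of_degree_eq hij.symm hmi, degree_eq_of_coeff_leadingForm_ne_zero hm]
  exact hzero j

end PurePower

section BinomialFactor

lemma mod_eq_of_mul_add_mul_eq {a b x y x' y' : ℕ} (hab : a.Coprime b)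
    (h : a * x + b * y = a * x' + b * y') : x % b = x' % b :=
  Nat.ModEq.cancel_left_of_coprime hab.symm <| show a * x % b = a * x' % b by
    simpa only [Nat.add_mul_mod_self_left] using congrArg (· % b) h

lemma div_add_div_eq_of_mul_add_mul_eq {a b x y x' y' : ℕ} (ha : 0 < a) (hb : 0 < b)
    (hab : a.Coprime b) (h : a * x + b * y = a * x' + b * y') :
    x / b + y / a = x' / b + y' / a := by
  have hx := mod_eq_of_mul_add_mul_eq hab h
  have hy : y % a = y' % a :=
    mod_eq_of_mul_add_mul_eq hab.symm (by rw [add_comm, h, add_comm])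
  refine Nat.eq_of_mul_eq_mul_left (Nat.mul_pos ha hb) ?_
  rw [← Nat.mod_add_div x b, ← Nat.mod_add_div y a, ← Nat.mod_add_div x' b,
    ← Nat.mod_add_div y' a, hx, hy] at h
  linarith

/-- The exponents of the monomials of `p` form an arithmetic progression of step `(b, -a)`. -/
lemma exists_eq_aeval_homogenize {R : Type*} [CommSemiring R]
    {p : MvPolynomial (Fin 2) R} {a b d : ℕ} (ha : 0 < a) (hb : 0 < b) (hab : a.Coprime b)
    (hp : IsWeightedHomogeneous ![a, b] p d) (hp0 : p ≠ 0) :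
    ∃ (x y K : ℕ) (h : Polynomial R), h.natDegree ≤ K ∧
      p = X 0 ^ x * X 1 ^ y * aeval ![X 0 ^ b, X 1 ^ a] (h.homogenize K) := by
  obtain ⟨n, hn⟩ := ne_zero_iff.1 hp0
  have hweight {m : Fin 2 →₀ ℕ} (hm : m ∈ p.support) : a * m 0 + b * m 1 = a * n 0 + b * n 1 := by
    simpa [Finsupp.weight_eq_sum, Fin.sum_univ_two, mul_comm] using
      (hp (mem_support_iff.1 hm)).trans (hp hn).symm
  have hdiv {m : Fin 2 →₀ ℕ} (hm : m ∈ p.support) :=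
    div_add_div_eq_of_mul_add_mul_eq ha hb hab (hweight hm)
  refine ⟨n 0 % b, n 1 % a, n 0 / b + n 1 / a,
    ∑ m ∈ p.support, Polynomial.monomial (m 0 / b) (p.coeff m),
    Polynomial.natDegree_sum_le_of_forall_le _ _ fun m hm =>
      (Polynomial.natDegree_monomial_le _).trans (hdiv hm ▸ Nat.le_add_right _ _), ?_⟩
  rw [Polynomial.homogenize_finsetSum, map_sum, Finset.mul_sum]
  nth_rw 1 [p.as_sum]
  refine Finset.sum_congr rfl fun m hm => ?_
  have hx : n 0 % b = m 0 % b := (mod_eq_of_mul_add_mul_eq hab (hweight hm)).symm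
  have hy : n 1 % a = m 1 % a :=
    mod_eq_of_mul_add_mul_eq hab.symm (by rw [add_comm, ← hweight hm, add_comm])
  rw [← hdiv hm, Polynomial.homogenize_monomial (Nat.le_add_right _ _), aeval_monomial,
    monomial_eq, Finsupp.prod_fintype _ _ (by simp), Finsupp.prod_fintype _ _ (by simp)]
  have hX (i : Fin 2) (c : ℕ) : (X i : MvPolynomial (Fin 2) R) ^ m i =
      X i ^ (m i % c) * (X i ^ c) ^ (m i / c) := by
    rw [← pow_mul, ← pow_add, Nat.mod_add_div]
  simp only [Fin.prod_univ_two, hX 0 b, hX 1 a, hx, hy, algebraMap_eq, Matrix.cons_val_zero,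
    Matrix.cons_val_one, Matrix.cons_val_fin_one, Finsupp.coe_update, Function.update_self,
    Function.update_of_ne zero_ne_one, Finsupp.single_eq_same, add_tsub_cancel_left]
  ring

variable {F σ : Type*} [Field F] {u v : MvPolynomial σ F} {h : Polynomial F} {K : ℕ}

/-- The quotient `u / v` is algebraic over `F`, hence a polynomial, hence a constant. -/
lemma exists_isRoot_of_aeval_homogenize_eq_zero (hh : h ≠ 0) (hK : h.natDegree ≤ K) (hu : u ≠ 0)
    (hv : v ≠ 0) (hdeg : u.totalDegree = v.totalDegree)
    (huv : aeval ![u, v] (h.homogenize K) = 0) : ∃ r, h.IsRoot r ∧ u = C r * v := by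
  let ι : MvPolynomial σ F →ₐ[F] FractionRing (MvPolynomial σ F) := Algebra.algHom _ _ _
  have hι : Function.Injective ι := IsFractionRing.injective _ _
  have hv' : ι v ≠ 0 := by rwa [map_ne_zero_iff ι hι]
  have hroot : Polynomial.aeval (ι u / ι v) h = 0 := by
    have hmap : ι (aeval ![u, v] (h.homogenize K)) =
        eval ![ι u, ι v] ((h.map (algebraMap F _)).homogenize K) := by
      rw [Polynomial.homogenize_map, eval_map, ← aeval_def, ← AlgHom.comp_apply, comp_aeval]
      congr 2
      ext i
      fin_cases i <;> rfl
    rw [huv, map_zero, Polynomial.eval_homogenize ((Polynomial.natDegree_map_le).trans hK) _ hv',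
      Polynomial.eval_map, ← Polynomial.aeval_def] at hmap
    exact (mul_eq_zero.1 hmap.symm).resolve_right (pow_ne_zero _ hv')
  have hint : IsIntegral (MvPolynomial σ F) (ι u / ι v) :=
    (IsAlgebraic.isIntegral ⟨h, hh, hroot⟩).tower_top
  obtain ⟨y, hy : ι y = _⟩ := IsIntegrallyClosed.algebraMap_eq_of_integral hint
  have huy : u = y * v := hι (by rw [map_mul, hy, div_mul_cancel₀ _ hv'])
  have hy0 : y ≠ 0 := left_ne_zero_of_mul (huy ▸ hu)
  rw [huy, totalDegree_mul_of_isDomain hy0 hv, Nat.add_eq_right, totalDegree_eq_zero_iff_eq_C]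
    at hdeg
  refine ⟨y.coeff 0, ?_, hdeg ▸ huy⟩
  rw [← hy, hdeg, Polynomial.aeval_algHom_apply, map_eq_zero_iff ι hι, ← algebraMap_eq,
    Polynomial.aeval_algebraMap_apply, algebraMap_eq, C_eq_zero] at hroot
  exact hroot

lemma sub_C_mul_dvd_aeval_homogenize {r : F} (hh : h ≠ 0) (hK : h.natDegree ≤ K)
    (hr : h.IsRoot r) : u - C r * v ∣ aeval ![u, v] (h.homogenize K) := by
  obtain ⟨q, rfl⟩ := Polynomial.dvd_iff_isRoot.2 hr
  have hq : q ≠ 0 := right_ne_zero_of_mul hh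
  rw [Polynomial.natDegree_mul (Polynomial.X_sub_C_ne_zero r) hq, Polynomial.natDegree_X_sub_C]
    at hK
  obtain ⟨n, rfl⟩ := Nat.exists_eq_add_of_le ((Nat.le_add_right _ _).trans hK)
  rw [Polynomial.homogenize_mul _ _ (Polynomial.natDegree_X_sub_C_le r)
    (Nat.le_of_add_le_add_left hK), map_mul]
  refine Dvd.dvd.mul_right (dvd_of_eq ?_) _
  simp [Polynomial.homogenize_X]

lemma exists_binomial_dvd {p : MvPolynomial (Fin 2) F} (hp0 : p ≠ 0) {a b d : ℕ} (ha : 0 < a)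
    (hb : 0 < b) (hab : a.Coprime b) (hp : IsWeightedHomogeneous ![a, b] p d)
    {g : Fin 2 → MvPolynomial σ F} (hg : ∀ i, g i ≠ 0)
    (hdeg : (g 0 ^ b).totalDegree = (g 1 ^ a).totalDegree) (hz : aeval g p = 0) :
    ∃ r, r ≠ 0 ∧ g 0 ^ b = C r * g 1 ^ a ∧
      (X 0 ^ b - C r * X 1 ^ a : MvPolynomial (Fin 2) F) ∣ p := by
  obtain ⟨x, y, K, h, hK, rfl⟩ := exists_eq_aeval_homogenize ha hb hab hp hp0
  have hh : h ≠ 0 := by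
    rintro rfl
    simp at hp0
  have hg0 := pow_ne_zero b (hg 0)
  have hg1 := pow_ne_zero a (hg 1)
  have hz' : aeval ![g 0 ^ b, g 1 ^ a] (h.homogenize K) = 0 := by
    rw [map_mul, map_mul, map_pow, map_pow, aeval_X, aeval_X, ← AlgHom.comp_apply, comp_aeval] at hz
    convert (mul_eq_zero.1 hz).resolve_left
      (mul_ne_zero (pow_ne_zero x (hg 0)) (pow_ne_zero y (hg 1))) using 3
    ext i
    fin_cases i <;> simp
  obtain ⟨r, hr, hgr⟩ := exists_isRoot_of_aeval_homogenize_eq_zero hh hK hg0 hg1 hdeg hz'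
  refine ⟨r, ?_, hgr, (sub_C_mul_dvd_aeval_homogenize hh hK hr).mul_left _⟩
  rintro rfl
  exact hg0 (by rw [hgr, C_0, zero_mul])

end BinomialFactor

/-! ### Elementary reduction of automorphisms of the plane -/

section Reduction

variable {F : Type*} [Field F]

lemma one_lt_weightedTotalDegree {σ : Type*} {w : σ → ℕ} (hw : ∀ i, 1 < w i)
    {p : MvPolynomial σ F} (hp : p.totalDegree ≠ 0) : 1 < weightedTotalDegree w p := by
  obtain ⟨m, hm, hm0⟩ : ∃ m ∈ p.support, m ≠ 0 := by
    by_contra! h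
    exact hp (Nat.eq_zero_of_le_zero (Finset.sup_le fun m hm => by simp [h m hm]))
  obtain ⟨i, hi⟩ := Finsupp.ne_iff.1 hm0
  exact (hw i).trans_le
    ((Finsupp.le_weight_of_ne_zero' w hi).trans (le_weightedTotalDegree w hm))

lemma aeval_algEquiv_X {σ R : Type*} [CommSemiring R] (e : MvPolynomial σ R ≃ₐ[R] MvPolynomial σ R)
    (p : MvPolynomial σ R) : aeval (fun i => e (X i)) p = e p :=
  (DFunLike.congr_fun (aeval_unique e.toAlgHom) p).symm

variable (θ : MvPolynomial (Fin 2) F ≃ₐ[F] MvPolynomial (Fin 2) F)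

lemma aeval_leadingForm_symm_X_eq_zero (h : ∀ i, 2 ≤ (θ (X i)).totalDegree) :
    aeval (fun i => leadingForm (θ (X i)))
      (weightedLeadingForm (fun i => (θ (X i)).totalDegree) (θ.symm (X 0))) = 0 := by
  refine aeval_leadingForm_eq_zero_of_totalDegree_lt _ ?_
  rw [aeval_algEquiv_X, θ.apply_symm_apply, totalDegree_X]
  refine one_lt_weightedTotalDegree h fun h0 => ?_
  have hX := congrArg (fun p => (θ p).totalDegree) (totalDegree_eq_zero_iff_eq_C.1 h0)
  rw [θ.apply_symm_apply, ← algebraMap_eq, θ.commutes, algebraMap_eq, totalDegree_X,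
    totalDegree_C] at hX
  exact one_ne_zero hX

/-- By rigidity of the curve `X₀ ^ b = r * X₁ ^ a`, no deformation fixes its equation. -/
lemma eq_one_or_eq_one_of_dvd_weightedLeadingForm {a b : ℕ} (ha : 0 < a) (hb : 0 < b)
    (hab : a.Coprime b) (w : Fin 2 → ℕ) {r : F} (hr : r ≠ 0)
    (h : (X 0 ^ b - C r * X 1 ^ a : MvPolynomial (Fin 2) F) ∣ weightedLeadingForm w (θ (X 0))) :
    a = 1 ∨ b = 1 := by
  by_contra! hne
  obtain ⟨ψ, hψ, hψne, hfix⟩ :=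
    (isDeformation_translation θ).exists_fixing_weightedLeadingForm (translation_ne_CAlgHom θ) w
  have hC := hψ.eq_C_of_dvd (weightedLeadingForm_ne_zero (by simp))
    (hfix _ (translation_X_zero θ)) h
  have hC' : Polynomial.C (C 1) * ψ (X 0) ^ b + Polynomial.C (C (-r)) * ψ (X 1) ^ a =
      Polynomial.C (C 1 * X 0 ^ b + C (-r) * X 1 ^ a) := by
    have hψC : ψ (C r) = Polynomial.C (C r) := ψ.commutes r
    simpa [sub_eq_add_neg, ← neg_mul, hψC] using hC
  obtain ⟨h0, h1⟩ := natDegree_eq_zero_of_generic_level_of_coprime zero_ne_one (by omega)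
    (by omega) hab one_ne_zero (neg_ne_zero.2 hr) hC'
  refine hψne (MvPolynomial.algHom_ext fun i => hψ.eq_C_of_natDegree_eq_zero ?_)
  fin_cases i
  · exact h0
  · exact h1

lemma totalDegree_sub_C_mul_pow_lt {σ : Type*} {p q : MvPolynomial σ F} {r : F} {n : ℕ}
    (hp : 0 < p.totalDegree) (hdeg : p.totalDegree = n * q.totalDegree)
    (h : leadingForm p = C r * leadingForm q ^ n) :
    (p - C r * q ^ n).totalDegree < p.totalDegree := by
  refine totalDegree_lt_of_homogeneousComponent_eq_zero hp ?_ ?_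
  · refine (totalDegree_sub _ _).trans (max_le le_rfl ?_)
    rw [C_mul']
    exact (totalDegree_smul_le _ _).trans ((totalDegree_pow q n).trans hdeg.ge)
  · rw [map_sub, homogeneousComponent_C_mul, ← leadingForm_eq, h, hdeg,
      homogeneousComponent_mul_totalDegree_pow, sub_self]

lemma isWeightedHomogeneous_div {σ R : Type*} [CommSemiring R] {w w' : σ → ℕ} {n d : ℕ}
    {p : MvPolynomial σ R} (hn : 0 < n) (hw : ∀ i, w i = w' i * n)
    (hp : IsWeightedHomogeneous w p d) : IsWeightedHomogeneous w' p (d / n) := by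
  intro m hm
  have hweight : Finsupp.weight w m = Finsupp.weight w' m * n := by
    simp only [Finsupp.weight_apply, Finsupp.sum, hw, smul_eq_mul, Finset.sum_mul, mul_assoc]
  rw [← hp hm, hweight, Nat.mul_div_cancel _ hn]

/-- The larger leading form is a multiple of a power of the smaller one. -/
lemma exists_totalDegree_sub_C_mul_pow_lt (h2 : 2 ≤ (θ (X 1)).totalDegree)
    (hle : (θ (X 1)).totalDegree ≤ (θ (X 0)).totalDegree) :
    ∃ (c : F) (n : ℕ), (θ (X 0) - C c * θ (X 1) ^ n).totalDegree < (θ (X 0)).totalDegree := by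
  have hne (i : Fin 2) : θ (X i) ≠ 0 := by simp
  have hz := aeval_leadingForm_symm_X_eq_zero θ (Fin.forall_fin_two.2 ⟨h2.trans hle, h2⟩)
  obtain ⟨G, a, b, hG, hab, ha, hb⟩ := Nat.exists_coprime' (m := (θ (X 0)).totalDegree)
    (n := (θ (X 1)).totalDegree) (Nat.gcd_pos_of_pos_right _ (by omega))
  have hb0 : 0 < b := Nat.pos_of_ne_zero (by rintro rfl; omega)
  have hba : b ≤ a := Nat.le_of_mul_le_mul_right (ha ▸ hb ▸ hle) hG
  have hw := isWeightedHomogeneous_div (w := fun i => (θ (X i)).totalDegree) (w' := ![a, b]) hG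
    (Fin.forall_fin_two.2 ⟨ha, hb⟩) (isWeightedHomogeneous_weightedLeadingForm _ (θ.symm (X 0)))
  obtain ⟨r, hr, hlead, hdvd⟩ := exists_binomial_dvd (weightedLeadingForm_ne_zero (by simp))
    (hb0.trans_le hba) hb0 hab hw (fun i => leadingForm_ne_zero (hne i)) (by
      rw [totalDegree_pow_of_isDomain (leadingForm_ne_zero (hne 0)),
        totalDegree_pow_of_isDomain (leadingForm_ne_zero (hne 1)),
        totalDegree_leadingForm (hne 0), totalDegree_leadingForm (hne 1), ha, hb]
      ring) hz
  obtain rfl : b = 1 := by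
    have := eq_one_or_eq_one_of_dvd_weightedLeadingForm θ.symm (hb0.trans_le hba) hb0 hab _ hr hdvd
    omega
  refine ⟨r, a, totalDegree_sub_C_mul_pow_lt (by omega) (by rw [hb, one_mul, ha]) ?_⟩
  rwa [pow_one] at hlead

end Reduction

/-! ### Coordinate systems -/

section Affine

variable {R : Type*}

lemma eq_affine_of_totalDegree_le_one [CommSemiring R] {p : MvPolynomial (Fin 2) R}
    (hp : p.totalDegree ≤ 1) :
    p = C (p.coeff (Finsupp.single 0 1)) * X 0 + C (p.coeff (Finsupp.single 1 1)) * X 1 +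
      C (p.coeff 0) := by
  have hcases (m : Fin 2 →₀ ℕ) (hm : m.degree ≤ 1) :
      m = 0 ∨ m = Finsupp.single 0 1 ∨ m = Finsupp.single 1 1 := by
    have hsum : m 0 + m 1 ≤ 1 := by rwa [Finsupp.degree_eq_sum, Fin.sum_univ_two] at hm
    have hdeg : m.degree = 0 ∨ m.degree = 1 := Nat.le_one_iff_eq_zero_or_eq_one.1 hm
    rcases (by omega : m 0 = 0 ∨ m 1 = 0) with h | h
    · rw [eq_single_of_degree_eq zero_ne_one h]
      rcases hdeg with h | h <;> simp [h]
    · rw [eq_single_of_degree_eq one_ne_zero h]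
      rcases hdeg with h | h <;> simp [h]
  ext m
  by_cases hm : m.degree ≤ 1
  · rcases hcases m hm with rfl | rfl | rfl <;>
      simp [coeff_C, coeff_X, Finsupp.single_left_inj, eq_comm (a := (0 : Fin 2 →₀ ℕ))]
  · rw [coeff_eq_zero_of_totalDegree_lt (hp.trans_lt (not_le.1 hm))]
    have h0 : m ≠ 0 := by rintro rfl; simp at hm
    have h1 (i : Fin 2) : m ≠ Finsupp.single i 1 := by rintro rfl; simp at hm
    simp [coeff_C, coeff_X, h0.symm, (h1 _).symm]

lemma totalDegree_affine_le [CommSemiring R] (a b c : R) :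
    (C a * X 0 + C b * X 1 + C c : MvPolynomial (Fin 2) R).totalDegree ≤ 1 := by
  have hX (r : R) (i : Fin 2) : (C r * X i : MvPolynomial (Fin 2) R).totalDegree ≤ 1 :=
    (totalDegree_mul _ _).trans (by
      rw [totalDegree_C, zero_add, X]
      exact (totalDegree_monomial_le _ _).trans (by simp))
  exact (totalDegree_add _ _).trans
    (max_le ((totalDegree_add _ _).trans (max_le (hX a 0) (hX b 1))) (by simp))

lemma totalDegree_algEquiv [CommSemiring R] {σ : Type*}
    (e : MvPolynomial σ R ≃ₐ[R] MvPolynomial σ R) (h : ∀ i, (e (X i)).totalDegree ≤ 1)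
    (h' : ∀ i, (e.symm (X i)).totalDegree ≤ 1) (p : MvPolynomial σ R) :
    (e p).totalDegree = p.totalDegree := by
  have hle {e : MvPolynomial σ R ≃ₐ[R] MvPolynomial σ R} (h : ∀ i, (e (X i)).totalDegree ≤ 1)
      (p : MvPolynomial σ R) : (e p).totalDegree ≤ p.totalDegree :=
    aeval_algEquiv_X e p ▸ totalDegree_aeval_le_of_totalDegree_le_one h p
  exact le_antisymm (hle h p) (by simpa using hle h' (e p))

variable [CommRing R]

/-- The triangular automorphism of `R[X₀, X₁]` that fixes `X₁` and maps `a X₀ + p(X₁)` to `X₀`. -/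
noncomputable def triangular (a : Rˣ) (p : Polynomial R) :
    MvPolynomial (Fin 2) R ≃ₐ[R] MvPolynomial (Fin 2) R :=
  AlgEquiv.ofAlgHom (aeval ![C (↑a⁻¹ : R) * (X 0 - Polynomial.aeval (X 1) p), X 1])
    (aeval ![C (a : R) * X 0 + Polynomial.aeval (X 1) p, X 1])
    (MvPolynomial.algHom_ext <| Fin.forall_fin_two.2
      ⟨by simp [← Polynomial.aeval_algHom_apply, ← mul_assoc, ← C_mul], by simp⟩)
    (MvPolynomial.algHom_ext <| Fin.forall_fin_two.2
      ⟨by simp [← Polynomial.aeval_algHom_apply, ← mul_assoc, ← C_mul], by simp⟩)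

variable (a : Rˣ) (p : Polynomial R)

lemma triangular_X_zero :
    triangular a p (X 0) = C (↑a⁻¹ : R) * (X 0 - Polynomial.aeval (X 1) p) := by
  simp [triangular]

lemma triangular_X_one : triangular a p (X 1) = X 1 := by
  simp [triangular]

lemma triangular_symm_X_zero :
    (triangular a p).symm (X 0) = C (a : R) * X 0 + Polynomial.aeval (X 1) p := by
  simp [triangular]

lemma triangular_symm_X_one : (triangular a p).symm (X 1) = X 1 := by
  simp [triangular]

lemma totalDegree_triangular (hp : p.natDegree ≤ 1) (q : MvPolynomial (Fin 2) R) :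
    (triangular a p q).totalDegree = q.totalDegree := by
  have hX : (X 1 : MvPolynomial (Fin 2) R).totalDegree ≤ 1 := by
    simpa using totalDegree_affine_le (R := R) 0 1 0
  have hp : Polynomial.aeval (X 1 : MvPolynomial (Fin 2) R) p =
      C (p.coeff 1) * X 1 + C (p.coeff 0) := by
    conv_lhs => rw [Polynomial.eq_X_add_C_of_natDegree_le_one hp]
    simp [← algebraMap_eq]
  refine totalDegree_algEquiv _ (Fin.forall_fin_two.2 ⟨?_, ?_⟩) (Fin.forall_fin_two.2 ⟨?_, ?_⟩) q
  · rw [triangular_X_zero, hp]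
    convert totalDegree_affine_le (↑a⁻¹ : R) (-(↑a⁻¹ * p.coeff 1)) (-(↑a⁻¹ * p.coeff 0)) using 2
    simp only [C_neg, C_mul]
    ring
  · rwa [triangular_X_one]
  · rw [triangular_symm_X_zero, hp, ← add_assoc]
    exact totalDegree_affine_le _ _ _
  · rwa [triangular_symm_X_one]

/-- The exchange of the two variables of `R[X₀, X₁]`. -/
noncomputable def swap : MvPolynomial (Fin 2) R ≃ₐ[R] MvPolynomial (Fin 2) R :=
  renameEquiv R (Equiv.swap 0 1)

lemma swap_X_zero : swap (X 0 : MvPolynomial (Fin 2) R) = X 1 := by simp [swap]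

lemma totalDegree_swap (p : MvPolynomial (Fin 2) R) : (swap p).totalDegree = p.totalDegree :=
  totalDegree_renameEquiv _ _

lemma coeff_swap_single_zero (p : MvPolynomial (Fin 2) R) (n : ℕ) :
    (swap p).coeff (Finsupp.single 0 n) = p.coeff (Finsupp.single 1 n) := by
  have h : (Finsupp.single 0 n : Fin 2 →₀ ℕ) =
      Finsupp.mapDomain (Equiv.swap 0 1) (Finsupp.single 1 n) := by
    simp [Finsupp.mapDomain_single]
  rw [swap, renameEquiv_apply, h, coeff_rename_mapDomain _ (Equiv.injective _)]

end Affine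

/-- A coordinate system of the `R`-algebra `A`: an identification of `A` with `R[X₀, X₁]`. The
coordinates are the elements mapped to `X₀` and `X₁`. -/
abbrev CoordinateSystem (R A : Type*) [CommSemiring R] [Semiring A] [Algebra R A] :=
  A ≃ₐ[R] MvPolynomial (Fin 2) R

section Coordinates

variable {F A : Type*} [Field F] [CommRing A] [Algebra F A]
  {s : CoordinateSystem F A} {x z : A}

lemma exists_apply_eq_X_zero (hz : (s z).totalDegree ≤ 1)
    (h0 : (s z).coeff (Finsupp.single 0 1) ≠ 0) :
    ∃ s' : CoordinateSystem F A, s' z = X 0 ∧ s' (s.symm (X 1)) = X 1 ∧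
      ∀ c, (s' c).totalDegree = (s c).totalDegree := by
  let p := Polynomial.C ((s z).coeff (Finsupp.single 1 1)) * Polynomial.X +
    Polynomial.C ((s z).coeff 0)
  refine ⟨s.trans (triangular (Units.mk0 _ h0) p), ?_, ?_,
    fun c => totalDegree_triangular _ _ Polynomial.natDegree_linear_le _⟩
  · rw [AlgEquiv.trans_apply, ← AlgEquiv.eq_symm_apply, triangular_symm_X_zero]
    conv_lhs => rw [eq_affine_of_totalDegree_le_one hz]
    simp [p, ← algebraMap_eq, add_assoc]
  · rw [AlgEquiv.trans_apply, s.apply_symm_apply, triangular_X_one]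

lemma exists_coeff_single_zero_ne_zero (hx : (s x).totalDegree = 1) :
    ∃ s' : CoordinateSystem F A, (s' x).coeff (Finsupp.single 0 1) ≠ 0 ∧
      ∀ c, (s' c).totalDegree = (s c).totalDegree := by
  by_cases h0 : (s x).coeff (Finsupp.single 0 1) = 0
  · refine ⟨s.trans swap, fun h1 => ?_, fun c => totalDegree_swap _⟩
    rw [AlgEquiv.trans_apply, coeff_swap_single_zero] at h1
    have hconst := eq_affine_of_totalDegree_le_one hx.le
    rw [h0, h1] at hconst
    rw [hconst] at hx
    simp at hx
  · exact ⟨s, h0, fun _ => rfl⟩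

lemma exists_apply_eq_X_one (hx : (s x).totalDegree = 1) :
    ∃ s' : CoordinateSystem F A, s' x = X 1 ∧ ∀ c, (s' c).totalDegree = (s c).totalDegree := by
  obtain ⟨s₁, h0, hd₁⟩ := exists_coeff_single_zero_ne_zero hx
  obtain ⟨s₂, hs₂, -, hd₂⟩ := exists_apply_eq_X_zero ((hd₁ x).trans hx).le h0
  refine ⟨s₂.trans swap, ?_, fun c => (totalDegree_swap _).trans ((hd₂ c).trans (hd₁ c))⟩
  rw [AlgEquiv.trans_apply, hs₂, swap_X_zero]

lemma exists_apply_eq_X_zero_and_X_one (hx : (s x).totalDegree = 1) (hz : (s z).totalDegree = 1)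
    (hspan : z ∉ Submodule.span F {1, x}) :
    ∃ s' : CoordinateSystem F A, s' z = X 0 ∧ s' x = X 1 ∧
      ∀ c, (s' c).totalDegree = (s c).totalDegree := by
  obtain ⟨s₁, hs₁, hd₁⟩ := exists_apply_eq_X_one hx
  have hz₁ : (s₁ z).totalDegree ≤ 1 := ((hd₁ z).trans hz).le
  have h0 : (s₁ z).coeff (Finsupp.single 0 1) ≠ 0 := fun h0 => by
    refine hspan (Submodule.mem_span_pair.2
      ⟨(s₁ z).coeff 0, (s₁ z).coeff (Finsupp.single 1 1), s₁.injective ?_⟩)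
    conv_rhs => rw [eq_affine_of_totalDegree_le_one hz₁, h0]
    simp [hs₁, smul_eq_C_mul, add_comm]
  obtain ⟨s₂, hs₂, hs₂', hd₂⟩ := exists_apply_eq_X_zero hz₁ h0
  refine ⟨s₂, hs₂, ?_, fun c => (hd₂ c).trans (hd₁ c)⟩
  rwa [← hs₁, s₁.symm_apply_apply, hs₁] at hs₂'

end Coordinates

/-! ### Convexity of degrees and minimal coordinate systems -/

section PurePower

lemma weight_lt_of_degree_le {σ : Type*} {w : σ → ℕ} {i : σ} (hi : 0 < w i)
    (hw : ∀ j ≠ i, w j < w i) {m : σ →₀ ℕ} {n : ℕ} (hm : m.degree ≤ n)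
    (hne : m ≠ Finsupp.single i n) : Finsupp.weight w m < n * w i := by
  have hle (j : σ) : w j ≤ w i := (eq_or_ne j i).elim (fun h => h ▸ le_rfl) fun h => (hw j h).le
  have hweight : Finsupp.weight w m = ∑ j ∈ m.support, m j * w j := by
    simp [Finsupp.weight_apply, Finsupp.sum]
  have hdeg : m.degree * w i = ∑ j ∈ m.support, m j * w i := by
    rw [Finsupp.degree_apply, Finset.sum_mul]
  by_cases h : ∃ j ∈ m.support, j ≠ i
  · obtain ⟨j, hj, hji⟩ := h
    refine lt_of_lt_of_le ?_ (Nat.mul_le_mul_right (w i) hm)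
    rw [hweight, hdeg]
    exact Finset.sum_lt_sum (fun k _ => Nat.mul_le_mul_left _ (hle k))
      ⟨j, hj, Nat.mul_lt_mul_of_pos_left (hw j hji)
        (Nat.pos_of_ne_zero (Finsupp.mem_support_iff.1 hj))⟩
  · obtain ⟨k, rfl⟩ : ∃ k, m = Finsupp.single i k :=
      Finsupp.support_subset_singleton'.1 fun j hj => by
        by_contra hji
        exact h ⟨j, hj, fun hji' => hji (by simp [hji'])⟩
    have hk : k < n := by
      refine lt_of_le_of_ne (by simpa using hm) ?_
      rintro rfl
      exact hne rfl
    simpa [Finsupp.weight_single] using Nat.mul_lt_mul_of_pos_right hk hi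

lemma weightedLeadingForm_eq_monomial {σ R : Type*} [CommSemiring R] {w : σ → ℕ}
    {p : MvPolynomial σ R} {d : σ →₀ ℕ} (hdeg : weightedTotalDegree w p = Finsupp.weight w d)
    (hlt : ∀ m ∈ p.support, m ≠ d → Finsupp.weight w m < Finsupp.weight w d) :
    weightedLeadingForm w p = monomial d (p.coeff d) := by
  classical
  ext m
  rw [weightedLeadingForm, hdeg, coeff_weightedHomogeneousComponent, coeff_monomial]
  rcases eq_or_ne m d with rfl | hne
  · rw [if_pos rfl, if_pos rfl]
  · rw [if_neg hne.symm, ite_eq_right_iff]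
    exact fun h => notMem_support_iff.1 fun hm => (hlt m hm hne).ne h

lemma totalDegree_aeval_of_coeff_single_ne_zero {σ κ R : Type*} [CommRing R] [IsDomain R]
    {q : MvPolynomial κ R} {g : κ → MvPolynomial σ R} {i : κ}
    (hq : q.coeff (Finsupp.single i q.totalDegree) ≠ 0) (hi : 0 < (g i).totalDegree)
    (hg : ∀ j ≠ i, (g j).totalDegree < (g i).totalDegree) :
    (aeval g q).totalDegree = q.totalDegree * (g i).totalDegree := by
  let w := fun j => (g j).totalDegree
  let d := Finsupp.single i q.totalDegree
  have hd : Finsupp.weight w d = q.totalDegree * w i := by simp [d, Finsupp.weight_single]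
  have hlt : ∀ m ∈ q.support, m ≠ d → Finsupp.weight w m < Finsupp.weight w d := fun m hm hne =>
    hd ▸ weight_lt_of_degree_le (w := w) hi hg (le_totalDegree hm) hne
  have hdeg : weightedTotalDegree w q = Finsupp.weight w d :=
    (Finset.sup_le fun m hm => (eq_or_ne m d).elim (fun h => h ▸ le_rfl)
      fun h => (hlt m hm h).le).antisymm (le_weightedTotalDegree w (mem_support_iff.2 hq))
  have hgi : g i ≠ 0 := fun h => by simp [h] at hi
  rw [← hd, ← hdeg]
  refine le_antisymm (totalDegree_aeval_le_weightedTotalDegree g) (not_lt.1 fun h => ?_)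
  have hzero := aeval_leadingForm_eq_zero_of_totalDegree_lt g h
  have hprod : d.prod (fun j n => leadingForm (g j) ^ n) = leadingForm (g i) ^ q.totalDegree :=
    Finsupp.prod_single_index (pow_zero _)
  rw [weightedLeadingForm_eq_monomial hdeg hlt, aeval_monomial, hprod, algebraMap_eq] at hzero
  exact mul_ne_zero (C_ne_zero.2 hq) (pow_ne_zero _ (leadingForm_ne_zero hgi)) hzero

end PurePower

section CoordinateDegree

variable {R A : Type*} [CommRing R] [CommRing A] [Algebra R A]

lemma aeval_symm_X (s t : CoordinateSystem R A) (x : A) :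
    aeval (fun i => t (s.symm (X i))) (s x) = t x := by
  simpa using aeval_algEquiv_X (s.symm.trans t) (s x)

lemma totalDegree_eq_zero_iff_mem_one (s : CoordinateSystem R A) {x : A} :
    (s x).totalDegree = 0 ↔ x ∈ (1 : Submodule R A) := by
  rw [Submodule.mem_one, totalDegree_eq_zero_iff_eq_C]
  refine ⟨fun h => ⟨(s x).coeff 0, s.injective ?_⟩, ?_⟩
  · rw [s.commutes, algebraMap_eq, ← h]
  · rintro ⟨r, rfl⟩
    simp [algebraMap_eq]

lemma totalDegree_pos_of_totalDegree_pos {s : CoordinateSystem R A} {x : A}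
    (h : 0 < (s x).totalDegree) (t : CoordinateSystem R A) : 0 < (t x).totalDegree := by
  rw [Nat.pos_iff_ne_zero, ne_eq, totalDegree_eq_zero_iff_mem_one] at h ⊢
  exact h

variable (R) in
/-- `x` is a coordinate of the `R`-algebra `A`: a member of some coordinate system. -/
def IsCoordinate (x : A) : Prop :=
  ∃ u : CoordinateSystem R A, u x = X 0

end CoordinateDegree

section Convexity

variable {F A : Type*} [Field F] [CommRing A] [Algebra F A]

/-- The leading form of `s x` involves a pure power of a variable, so the degree at least doubles
in `t₁` or in `t₂`. -/
lemma IsCoordinate.two_mul_totalDegree_lt {x : A} (hx : IsCoordinate F x)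
    {s t₁ t₂ : CoordinateSystem F A} (h₁ : 2 ≤ (t₁ (s.symm (X 0))).totalDegree)
    (h₁' : (t₁ (s.symm (X 1))).totalDegree < (t₁ (s.symm (X 0))).totalDegree)
    (h₂ : 2 ≤ (t₂ (s.symm (X 1))).totalDegree)
    (h₂' : (t₂ (s.symm (X 0))).totalDegree < (t₂ (s.symm (X 1))).totalDegree) :
    2 * (s x).totalDegree < (t₁ x).totalDegree + (t₂ x).totalDegree := by
  obtain ⟨u, hu⟩ := hx
  have hpos (t : CoordinateSystem F A) : 0 < (t x).totalDegree :=
    totalDegree_pos_of_totalDegree_pos (s := u) (by simp [hu]) t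
  obtain ⟨i, hi⟩ := exists_coeff_single_totalDegree_ne_zero (u.symm.trans s)
  rw [AlgEquiv.trans_apply, ← hu, u.symm_apply_apply] at hi
  obtain rfl | rfl : i = 0 ∨ i = 1 := by omega
  · have hdeg := totalDegree_aeval_of_coeff_single_ne_zero
      (g := fun l => t₁ (s.symm (X l))) hi (by positivity)
      (Fin.forall_fin_two.2 ⟨fun h => (h rfl).elim, fun _ => h₁'⟩)
    rw [aeval_symm_X] at hdeg
    have := hpos t₂
    nlinarith
  · have hdeg := totalDegree_aeval_of_coeff_single_ne_zero
      (g := fun l => t₂ (s.symm (X l))) hi (by positivity)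
      (Fin.forall_fin_two.2 ⟨fun _ => h₂', fun h => (h rfl).elim⟩)
    rw [aeval_symm_X] at hdeg
    have := hpos t₁
    nlinarith

end Convexity

section Minimal

variable {R A ι : Type*} [CommRing R] [CommRing A] [Algebra R A] [Fintype ι]

/-- The sum of the degrees of a finite family of elements in a coordinate system. -/
noncomputable def size (f : ι → A) (s : CoordinateSystem R A) : ℕ :=
  ∑ i, (s (f i)).totalDegree

/-- A coordinate system is minimal for the family `f` if the size of `f` is least in it. -/
def IsMinimal (f : ι → A) (s : CoordinateSystem R A) : Prop :=
  ∀ t : CoordinateSystem R A, size f s ≤ size f t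

lemma exists_isMinimal [Nonempty (CoordinateSystem R A)] (f : ι → A) :
    ∃ s : CoordinateSystem R A, IsMinimal f s :=
  ⟨Function.argmin (size f), fun t => Function.argmin_le (size f) t⟩

end Minimal

section MinimalElements

variable {F A ι : Type*} [Field F] [CommRing A] [Algebra F A]

lemma exists_totalDegree_symm_X_zero_lt_of_le {s : CoordinateSystem F A} (t : CoordinateSystem F A)
    (h2 : 2 ≤ (t (s.symm (X 1))).totalDegree)
    (hle : (t (s.symm (X 1))).totalDegree ≤ (t (s.symm (X 0))).totalDegree) :
    ∃ s' : CoordinateSystem F A, s' (s.symm (X 1)) = X 1 ∧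
      (t (s'.symm (X 0))).totalDegree < (t (s.symm (X 0))).totalDegree := by
  obtain ⟨c, n, hlt⟩ := exists_totalDegree_sub_C_mul_pow_lt (s.symm.trans t) h2 hle
  let p := -(Polynomial.C c * Polynomial.X ^ n)
  refine ⟨s.trans (triangular 1 p), ?_, ?_⟩
  · rw [AlgEquiv.trans_apply, s.apply_symm_apply, triangular_X_one]
  · have hp : (triangular 1 p).symm (X 0) = X 0 - C c * X 1 ^ n := by
      rw [triangular_symm_X_zero, Units.val_one, C_1, one_mul]
      simp [p, ← algebraMap_eq, sub_eq_add_neg]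
    have hst : (s.symm.trans t) (C c) = C c := (s.symm.trans t).commutes c
    change (t (s.symm ((triangular 1 p).symm (X 0)))).totalDegree < _
    rw [hp]
    change ((s.symm.trans t) (X 0 - C c * X 1 ^ n)).totalDegree < _
    rwa [map_sub, map_mul, map_pow, hst]

lemma exists_totalDegree_symm_X_zero_lt {s : CoordinateSystem F A} {x : A} (hs : s x = X 1)
    {t : CoordinateSystem F A} (hx : 2 ≤ (t x).totalDegree) :
    ∃ s' : CoordinateSystem F A,
      s' x = X 1 ∧ (t (s'.symm (X 0))).totalDegree < (t x).totalDegree := by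
  obtain ⟨s', hs', hmin⟩ := exists_minimalFor_of_wellFoundedLT
    (fun s' : CoordinateSystem F A => s' x = X 1) (fun s' => (t (s'.symm (X 0))).totalDegree)
    ⟨s, hs⟩
  refine ⟨s', hs', not_le.1 fun hle => ?_⟩
  have hx' : s'.symm (X 1) = x := (s'.symm_apply_eq).2 hs'.symm
  rw [← hx'] at hx hle
  obtain ⟨s'', hs'', hlt⟩ := exists_totalDegree_symm_X_zero_lt_of_le t hx hle
  exact hlt.not_ge (hmin (hx' ▸ hs'') hlt.le)

variable [Fintype ι] [Nonempty ι] {f : ι → A}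

lemma not_isMinimal_and_isMinimal (hf : ∀ i, IsCoordinate F (f i)) {s t₁ t₂ : CoordinateSystem F A}
    (h₁ : 2 ≤ (t₁ (s.symm (X 0))).totalDegree)
    (h₁' : (t₁ (s.symm (X 1))).totalDegree < (t₁ (s.symm (X 0))).totalDegree)
    (h₂ : 2 ≤ (t₂ (s.symm (X 1))).totalDegree)
    (h₂' : (t₂ (s.symm (X 0))).totalDegree < (t₂ (s.symm (X 1))).totalDegree) :
    ¬ (IsMinimal f t₁ ∧ IsMinimal f t₂) := by
  rintro ⟨ht₁, ht₂⟩
  have hlt : 2 * size f s < size f t₁ + size f t₂ := by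
    simp only [size, Finset.mul_sum, ← Finset.sum_add_distrib]
    exact Finset.sum_lt_sum_of_nonempty Finset.univ_nonempty fun i _ =>
      (hf i).two_mul_totalDegree_lt h₁ h₁' h₂ h₂'
  have := ht₁ s
  have := ht₂ s
  omega

/-- Otherwise, choose `x` of degree one in `s` with least degree in `t`, and complete it to a
coordinate system `s'` whose other coordinate has smaller degree in `t`. Convexity between `s` and
`t` fails at `s'`. -/
lemma IsMinimal.exists_totalDegree_eq_one (hf : ∀ i, IsCoordinate F (f i))
    {s t : CoordinateSystem F A} (hs : IsMinimal f s) (ht : IsMinimal f t) :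
    ∃ x, (s x).totalDegree = 1 ∧ (t x).totalDegree = 1 := by
  by_contra! hno
  obtain ⟨x, hx, hmin⟩ := exists_minimalFor_of_wellFoundedLT
    (fun x => (s x).totalDegree = 1) (fun x => (t x).totalDegree) ⟨s.symm (X 1), by simp⟩
  have htx : 2 ≤ (t x).totalDegree := by
    have := hno x hx
    have := totalDegree_pos_of_totalDegree_pos (hx.symm ▸ one_pos : 0 < (s x).totalDegree) t
    omega
  obtain ⟨s₁, hs₁, -⟩ := exists_apply_eq_X_one hx
  obtain ⟨s', hs', hlt⟩ := exists_totalDegree_symm_X_zero_lt hs₁ htx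
  have hx' : s'.symm (X 1) = x := (s'.symm_apply_eq).2 hs'.symm
  have hs2 : 2 ≤ (s (s'.symm (X 0))).totalDegree := by
    have : (s (s'.symm (X 0))).totalDegree ≠ 1 := fun h => hlt.not_ge (hmin h hlt.le)
    have := totalDegree_pos_of_totalDegree_pos (s := s') (x := s'.symm (X 0)) (by simp) s
    omega
  exact not_isMinimal_and_isMinimal hf hs2 (by simp only [hx', hx]; omega) (by rwa [hx'])
    (by rwa [hx']) ⟨hs, ht⟩

lemma totalDegree_le_one_of_mem_span {s : CoordinateSystem F A} {x z : A}
    (hz : (s z).totalDegree ≤ 1) (hx : x ∈ Submodule.span F {1, z}) : (s x).totalDegree ≤ 1 := by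
  obtain ⟨a, b, rfl⟩ := Submodule.mem_span_pair.1 hx
  rw [map_add, map_smul, map_smul, map_one]
  exact (totalDegree_add _ _).trans (max_le ((totalDegree_smul_le _ _).trans (by simp))
    ((totalDegree_smul_le _ _).trans hz))

/-- Suppose that the coordinate `c` of `s` has degree at least two in `t₀`, let `x` be common to `s`
and `t₀`, and suppose that it has degree at least two in `τ`. If `z` is common to `s` and `τ`, then
convexity between `t₀` and `τ` fails at the system `(x, z)`. -/
lemma exists_totalDegree_eq_one_of_isMinimal (hf : ∀ i, IsCoordinate F (f i))
    {s : CoordinateSystem F A} (hs : IsMinimal f s) :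
    ∃ x, ∀ t : CoordinateSystem F A, IsMinimal f t → (t x).totalDegree = 1 := by
  by_contra! hno
  have two_le {y : A} (hy : (s y).totalDegree = 1) {t : CoordinateSystem F A}
      (h : (t y).totalDegree ≠ 1) : 2 ≤ (t y).totalDegree := by
    have := totalDegree_pos_of_totalDegree_pos (hy.symm ▸ one_pos : 0 < (s y).totalDegree) t
    omega
  have hsc : (s (s.symm (X 1))).totalDegree = 1 := by simp
  obtain ⟨t₀, ht₀, hc⟩ := hno (s.symm (X 1))
  obtain ⟨x, hsx, hx⟩ := hs.exists_totalDegree_eq_one hf ht₀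
  obtain ⟨τ, hτ, hτx⟩ := hno x
  obtain ⟨z, hsz, hz⟩ := hs.exists_totalDegree_eq_one hf hτ
  have hspan : x ∉ Submodule.span F {1, z} := fun h => by
    have := totalDegree_le_one_of_mem_span hz.le h
    have := two_le hsx hτx
    omega
  obtain ⟨s', h0, h1, hdeg⟩ := exists_apply_eq_X_zero_and_X_one hsz hsx hspan
  have hx' : s'.symm (X 0) = x := (s'.symm_apply_eq).2 h0.symm
  have hz' : s'.symm (X 1) = z := (s'.symm_apply_eq).2 h1.symm
  have htz : 2 ≤ (t₀ z).totalDegree := by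
    by_contra! hlt
    have hle := totalDegree_aeval_le_of_totalDegree_le_one (g := fun i => t₀ (s'.symm (X i)))
      (Fin.forall_fin_two.2 ⟨by rw [hx', hx], by rw [hz']; omega⟩) (s' (s.symm (X 1)))
    rw [aeval_symm_X, hdeg, hsc] at hle
    have := two_le hsc hc
    omega
  exact not_isMinimal_and_isMinimal hf (s := s') (hx'.symm ▸ two_le hsx hτx)
    (by rw [hx', hz', hz]; exact two_le hsx hτx) (by rwa [hz']) (by rwa [hx', hz', hx]) ⟨hτ, ht₀⟩

end MinimalElements

/-! ### Automorphisms fixing a variable -/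

section Triangular

variable {R : Type*} [CommRing R]

lemma exists_eq_C_mul_X_add_C_of_comp_eq_X [IsDomain R] {p q : Polynomial R}
    (h : p.comp q = .X) :
    ∃ (a : Rˣ) (b : R), q = .C ↑a * .X + .C b := by
  have hdeg := congrArg Polynomial.natDegree h
  rw [Polynomial.natDegree_comp, Polynomial.natDegree_X] at hdeg
  have hp := Polynomial.eq_X_add_C_of_natDegree_le_one (Nat.eq_one_of_mul_eq_one_right hdeg).le
  have hq := Polynomial.eq_X_add_C_of_natDegree_le_one (Nat.eq_one_of_mul_eq_one_left hdeg).le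
  have hunit : p.coeff 1 * q.coeff 1 = 1 := by
    have hcoeff := congrArg (fun r => r.coeff 1) h
    rw [hp, hq] at hcoeff
    simpa [Polynomial.coeff_C] using hcoeff
  exact ⟨(IsUnit.of_mul_eq_one_right _ hunit).unit, q.coeff 0, hq⟩

variable (R) in
/-- The identification of `R[X₀, X₁]` with `R[X₁][X₀]`. -/
noncomputable def iteratedEquiv : MvPolynomial (Fin 2) R ≃ₐ[R] Polynomial (Polynomial R) :=
  (finSuccEquiv R 1).trans (Polynomial.mapAlgEquiv (uniqueAlgEquiv R (Fin 1)))

lemma iteratedEquiv_X_zero : iteratedEquiv R (X 0) = .X := by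
  simp [iteratedEquiv, finSuccEquiv_X_zero]

lemma iteratedEquiv_X_one : iteratedEquiv R (X 1) = .C .X := by
  have h : finSuccEquiv R 1 (X 1) = .C (X 0) := finSuccEquiv_X_succ (j := 0)
  simp [iteratedEquiv, h, uniqueAlgEquiv]

lemma iteratedEquiv_aeval_X_one (p : Polynomial R) :
    iteratedEquiv R (Polynomial.aeval (X 1) p) = .C p := by
  rw [← Polynomial.aeval_algHom_apply, iteratedEquiv_X_one]
  exact (Polynomial.aeval_algHom_apply Polynomial.CAlgHom _ _).trans (by simp)

lemma exists_eq_C_mul_X_add_aeval [IsDomain R]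
    (ρ : MvPolynomial (Fin 2) R ≃ₐ[R] MvPolynomial (Fin 2) R) (hρ : ρ (X 1) = X 1) :
    ∃ (a : Rˣ) (p : Polynomial R), ρ (X 0) = C (a : R) * X 0 + Polynomial.aeval (X 1) p := by
  let Φ := iteratedEquiv R
  let subst : MvPolynomial (Fin 2) R →ₐ[R] Polynomial (Polynomial R) :=
    ((Polynomial.aeval (R := Polynomial R) (Φ (ρ (X 0)))).restrictScalars R).comp Φ.toAlgHom
  have hsubst : subst = Φ.toAlgHom.comp ρ.toAlgHom := by
    refine MvPolynomial.algHom_ext (Fin.forall_fin_two.2 ⟨?_, ?_⟩)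
    · simp [subst, Φ, iteratedEquiv_X_zero]
    · simp [subst, Φ, iteratedEquiv_X_one, hρ]
  have hcomp : (Φ (ρ.symm (X 0))).comp (Φ (ρ (X 0))) = .X := by
    refine (DFunLike.congr_fun hsubst (ρ.symm (X 0))).trans ?_
    simp [Φ, iteratedEquiv_X_zero]
  obtain ⟨u, p, h⟩ := exists_eq_C_mul_X_add_C_of_comp_eq_X hcomp
  obtain ⟨_, ⟨a, rfl⟩, ha⟩ := Polynomial.isUnit_iff.1 u.isUnit
  refine ⟨a, p, Φ.injective ?_⟩
  have hC : Φ (C (a : R)) = .C (.C (a : R)) := Φ.commutes _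
  rw [h, ← ha, map_add Φ, map_mul, hC, iteratedEquiv_aeval_X_one, iteratedEquiv_X_zero]

end Triangular

/-! ### Galois descent -/

section Descent

lemma totalDegree_map_of_injective {σ R S : Type*} [CommSemiring R] [CommSemiring S] {f : R →+* S}
    (hf : Function.Injective f) (p : MvPolynomial σ R) :
    (MvPolynomial.map f p).totalDegree = p.totalDegree := by
  rw [totalDegree, totalDegree, support_map_of_injective _ hf]

lemma bijective_aeval_of_apply_one_tmul_eq_X {σ R S B : Type*} [CommRing R] [CommRing S]
    [Algebra R S] [Module.FaithfullyFlat R S] [CommRing B] [Algebra R B]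
    (s : (S ⊗[R] B) ≃ₐ[S] MvPolynomial σ S) {b : σ → B} (hb : ∀ i, s (1 ⊗ₜ[R] b i) = X i) :
    Function.Bijective (aeval b : MvPolynomial σ R →ₐ[R] B) := by
  let φ : MvPolynomial σ R →ₐ[R] B := aeval b
  have hcomp : s.toAlgHom.comp (Algebra.TensorProduct.map (AlgHom.id S S) φ) =
      (algebraTensorAlgEquiv (σ := σ) R S).toAlgHom := by
    ext i
    simp [φ, hb]
  have hφ : ⇑(φ.toLinearMap.lTensor S) = s.symm ∘ algebraTensorAlgEquiv (σ := σ) R S :=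
    funext fun x => (s.eq_symm_apply).2 (DFunLike.congr_fun hcomp x)
  rw [← AlgHom.coe_toLinearMap, ← Module.FaithfullyFlat.lTensor_bijective_iff_bijective R S, hφ]
  exact s.symm.bijective.comp (AlgEquiv.bijective _)

variable {K K' B : Type*} [Field K] [Field K'] [Algebra K K'] [CommRing B] [Algebra K B]

/-- The semilinear action of the automorphisms of `K' / K` on `K' ⊗ B` through the first factor. -/
noncomputable def act : (K' ≃ₐ[K] K') →* ((K' ⊗[K] B) ≃ₐ[K] (K' ⊗[K] B)) where
  toFun σ := Algebra.TensorProduct.congr σ AlgEquiv.refl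
  map_one' := Algebra.TensorProduct.congr_refl
  map_mul' σ τ := Algebra.TensorProduct.congr_trans τ σ AlgEquiv.refl AlgEquiv.refl

lemma act_tmul (σ : K' ≃ₐ[K] K') (a : K') (b : B) : act σ (a ⊗ₜ[K] b) = σ a ⊗ₜ[K] b := rfl

lemma act_algebraMap (σ : K' ≃ₐ[K] K') (r : K') :
    act σ (algebraMap K' (K' ⊗[K] B) r) = algebraMap K' (K' ⊗[K] B) (σ r) :=
  (act_tmul σ r 1).trans (by simp)

lemma act_smul (σ : K' ≃ₐ[K] K') (r : K') (c : K' ⊗[K] B) :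
    act σ (r • c) = σ r • act σ c := by
  rw [Algebra.smul_def, Algebra.smul_def, map_mul, act_algebraMap]

lemma sum_act_mem_range_one_tmul [FiniteDimensional K K'] [IsGalois K K'] (c : K' ⊗[K] B) :
    ∃ b : B, ∑ σ : K' ≃ₐ[K] K', act σ c = 1 ⊗ₜ[K] b := by
  induction c with
  | zero => exact ⟨0, by simp⟩
  | tmul a b =>
    refine ⟨Algebra.trace K K' a • b, ?_⟩
    simp only [act_tmul]
    rw [← TensorProduct.sum_tmul, ← trace_eq_sum_automorphisms, TensorProduct.tmul_smul,
      TensorProduct.smul_tmul', Algebra.algebraMap_eq_smul_one]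
  | add x y hx hy =>
    obtain ⟨b, hb⟩ := hx
    obtain ⟨b', hb'⟩ := hy
    exact ⟨b + b', by
      simp only [map_add, Finset.sum_add_distrib, hb, hb', TensorProduct.tmul_add]⟩

variable (K K') in
lemma linearIndependent_algEquiv : LinearIndependent K' fun (σ : K' ≃ₐ[K] K') (r : K') => σ r :=
  (linearIndependent_monoidHom K' K').comp (fun σ : K' ≃ₐ[K] K' => (σ : K' →* K'))
    fun σ τ (h : (σ : K' →* K') = τ) => AlgEquiv.ext fun r => DFunLike.congr_fun h r

/-- By independence of the automorphisms of `K'`, the traces of the multiples of `m` cannot all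
lie in `N`. -/
lemma exists_one_tmul_mem_notMem [FiniteDimensional K K'] [IsGalois K K']
    {M N : Submodule K' (K' ⊗[K] B)} (hM : ∀ (σ : K' ≃ₐ[K] K'), ∀ c ∈ M, act σ c ∈ M)
    {m : K' ⊗[K] B} (hm : m ∈ M) (hN : m ∉ N) :
    ∃ b : B, (1 : K') ⊗ₜ[K] b ∈ M ∧ (1 : K') ⊗ₜ[K] b ∉ N := by
  by_contra! hall
  obtain ⟨f, hf, hfN⟩ := Submodule.exists_le_ker_of_notMem hN
  have htrace (r : K') : ∑ σ : K' ≃ₐ[K] K', act σ (r • m) ∈ N := by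
    obtain ⟨b, hb⟩ := sum_act_mem_range_one_tmul (r • m)
    exact hb ▸ hall b (hb ▸ M.sum_mem fun σ _ => hM σ _ (M.smul_mem r hm))
  have hsum : ∑ σ : K' ≃ₐ[K] K', f (act σ m) • (fun r => σ r) = 0 := by
    ext r
    simpa [act_smul, mul_comm] using hfN (htrace r)
  have hone := Fintype.linearIndependent_iff.1 (linearIndependent_algEquiv K K') _ hsum 1
  rw [map_one, AlgEquiv.one_apply] at hone
  exact hf hone

/-- The conjugate of a coordinate system by `σ`. -/
noncomputable def conj (σ : K' ≃ₐ[K] K') (s : CoordinateSystem K' (K' ⊗[K] B)) :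
    CoordinateSystem K' (K' ⊗[K] B) :=
  AlgEquiv.ofRingEquiv
    (f := (act σ).symm.toRingEquiv.trans (s.toRingEquiv.trans (mapEquiv (Fin 2) σ.toRingEquiv)))
    fun r => by
      have h : (act σ).symm (algebraMap K' (K' ⊗[K] B) r) = algebraMap K' _ (σ.symm r) := by
        rw [AlgEquiv.symm_apply_eq, act_algebraMap, σ.apply_symm_apply]
      change MvPolynomial.map (σ : K' →+* K') (s ((act σ).symm _)) = _
      rw [h, s.commutes, algebraMap_eq, map_C]
      exact congrArg C (σ.apply_symm_apply r)

lemma conj_act (σ : K' ≃ₐ[K] K') (s : CoordinateSystem K' (K' ⊗[K] B)) (c : K' ⊗[K] B) :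
    conj σ s (act σ c) = MvPolynomial.map (σ : K' →+* K') (s c) :=
  congrArg (fun c => MvPolynomial.map (σ : K' →+* K') (s c)) ((act σ).symm_apply_apply c)

lemma totalDegree_conj_act (σ : K' ≃ₐ[K] K') (s : CoordinateSystem K' (K' ⊗[K] B))
    (c : K' ⊗[K] B) : (conj σ s (act σ c)).totalDegree = (s c).totalDegree := by
  rw [conj_act, totalDegree_map_of_injective σ.injective]

end Descent

/-! ### Separable forms of the affine plane over a field -/

section TriangularSubspace

variable {R A : Type*} [CommRing R] [CommRing A] [Algebra R A]

/-- The polynomials in the second coordinate of `s`. -/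
noncomputable def lineSubspace (s : CoordinateSystem R A) : Submodule R A :=
  (Polynomial.aeval (X 1 : MvPolynomial (Fin 2) R)).range.toSubmodule.comap s.toLinearMap

/-- The elements which are of the form `a X₀ + p(X₁)` in the coordinates `s`. They only depend on
the second coordinate, see `triangularSubspace_le`. -/
noncomputable def triangularSubspace (s : CoordinateSystem R A) : Submodule R A where
  carrier := {c | ∃ (a : R) (p : Polynomial R), s c = C a * X 0 + Polynomial.aeval (X 1) p}
  zero_mem' := ⟨0, 0, by simp⟩
  add_mem' := by
    rintro c d ⟨a, p, hc⟩ ⟨b, q, hd⟩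
    exact ⟨a + b, p + q, by rw [map_add, hc, hd, C_add, map_add]; ring⟩
  smul_mem' := by
    rintro r c ⟨a, p, hc⟩
    exact ⟨r * a, r • p, by rw [map_smul, hc, map_smul, smul_add, C_mul, mul_assoc, smul_eq_C_mul]⟩

lemma X_zero_ne_aeval_X_one [Nontrivial R] (p : Polynomial R) :
    (X 0 : MvPolynomial (Fin 2) R) ≠ Polynomial.aeval (X 1) p := by
  intro h
  have heval (v : Fin 2 → R) : v 0 = Polynomial.aeval (v 1) p := by
    simpa [← Polynomial.aeval_algHom_apply] using congrArg (aeval v) h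
  exact zero_ne_one ((heval ![0, 0]).trans (heval ![1, 0]).symm)

lemma symm_X_zero_mem_triangularSubspace (s : CoordinateSystem R A) :
    s.symm (X 0) ∈ triangularSubspace s :=
  ⟨1, 0, by simp⟩

lemma symm_X_zero_notMem_lineSubspace [Nontrivial R] (s : CoordinateSystem R A) :
    s.symm (X 0) ∉ lineSubspace s := by
  rintro ⟨p, hp⟩
  exact X_zero_ne_aeval_X_one p ((s.apply_symm_apply _).symm.trans hp.symm)

lemma triangularSubspace_le [IsDomain R] {s t : CoordinateSystem R A} {x : A}
    (hs : s x = X 1) (ht : t x = X 1) :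
    triangularSubspace t ≤ triangularSubspace s := by
  rintro c ⟨a, p, hc⟩
  let ρ := t.symm.trans s
  have hρ : ρ (X 1) = X 1 := by
    rw [AlgEquiv.trans_apply, (t.symm_apply_eq).2 ht.symm, hs]
  have hρp : ρ (Polynomial.aeval (X 1) p) = Polynomial.aeval (X 1) p := by
    rw [← AlgEquiv.coe_toAlgHom, ← Polynomial.aeval_algHom_apply, AlgEquiv.coe_toAlgHom, hρ]
  have hρa : ρ (C a) = C a := ρ.commutes a
  have hρc : s c = ρ (t c) := (congrArg s (t.symm_apply_apply c)).symm
  obtain ⟨b, q, hb⟩ := exists_eq_C_mul_X_add_aeval ρ hρ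
  refine ⟨a * b, a • q + p, ?_⟩
  rw [hρc, hc, map_add, map_mul, hρa, hρp, hb, map_add, map_smul, smul_eq_C_mul, C_mul]
  ring

lemma exists_apply_eq_X_zero_of_mem_triangularSubspace {F : Type*} [Field F] [Algebra F A]
    {s : CoordinateSystem F A} {c : A}
    (hc : c ∈ triangularSubspace s) (hc' : c ∉ lineSubspace s) :
    ∃ s' : CoordinateSystem F A, s' c = X 0 ∧ ∀ x, s x = X 1 → s' x = X 1 := by
  obtain ⟨a, p, h⟩ := hc
  have ha : a ≠ 0 := by
    rintro rfl
    exact hc' ⟨p, by simpa using h.symm⟩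
  refine ⟨s.trans (triangular (Units.mk0 a ha) p), ?_, fun x hx => ?_⟩
  · rw [AlgEquiv.trans_apply, h, ← AlgEquiv.eq_symm_apply, triangular_symm_X_zero, Units.val_mk0]
  · rw [AlgEquiv.trans_apply, hx, triangular_X_one]

end TriangularSubspace

section Forms

variable {K K' B : Type*} [Field K] [Field K'] [Algebra K K'] [CommRing B] [Algebra K B]

lemma act_mem_triangularSubspace_conj {s : CoordinateSystem K' (K' ⊗[K] B)} {c : K' ⊗[K] B}
    (hc : c ∈ triangularSubspace s) (σ : K' ≃ₐ[K] K') :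
    act σ c ∈ triangularSubspace (conj σ s) := by
  obtain ⟨a, p, h⟩ := hc
  refine ⟨σ a, p.map (σ : K' →+* K'), ?_⟩
  have hp : MvPolynomial.map (σ : K' →+* K') (Polynomial.aeval (X 1) p) =
      Polynomial.aeval (X 1 : MvPolynomial (Fin 2) K') (p.map (σ : K' →+* K')) := by
    rw [Polynomial.aeval_def, Polynomial.hom_eval₂, Polynomial.aeval_def, Polynomial.eval₂_map,
      map_X, algebraMap_eq]
    congr 1
    ext
    simp
  rw [conj_act, h, map_add, map_mul, map_C, map_X, hp]
  rfl

/-- The coordinate systems `s` and `conj σ s` share their second coordinate. -/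
lemma act_mem_triangularSubspace {s : CoordinateSystem K' (K' ⊗[K] B)} {b : B}
    (hs : s (1 ⊗ₜ[K] b) = X 1) (σ : K' ≃ₐ[K] K') {c : K' ⊗[K] B}
    (hc : c ∈ triangularSubspace s) : act σ c ∈ triangularSubspace s := by
  have hconj : conj σ s (1 ⊗ₜ[K] b) = X 1 := by
    have h := conj_act σ s (1 ⊗ₜ[K] b)
    rwa [act_tmul, map_one, hs, map_X] at h
  exact triangularSubspace_le hs hconj (act_mem_triangularSubspace_conj hc σ)

lemma isCoordinate_act (s : CoordinateSystem K' (K' ⊗[K] B)) (σ : K' ≃ₐ[K] K') :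
    IsCoordinate K' (act σ (s.symm (X 0))) :=
  ⟨conj σ s, by rw [conj_act, s.apply_symm_apply, map_X]⟩

variable [FiniteDimensional K K']

lemma isMinimal_conj {z : K' ⊗[K] B} {s : CoordinateSystem K' (K' ⊗[K] B)}
    (hs : IsMinimal (fun τ : K' ≃ₐ[K] K' => act τ z) s) (σ : K' ≃ₐ[K] K') :
    IsMinimal (fun τ : K' ≃ₐ[K] K' => act τ z) (conj σ s) := by
  have hsize : size (fun τ : K' ≃ₐ[K] K' => act τ z) s =
      size (fun τ : K' ≃ₐ[K] K' => act τ z) (conj σ s) :=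
    Fintype.sum_equiv (Equiv.mulLeft σ) _ _ fun τ => by
      simp only [Equiv.coe_mulLeft, map_mul, AlgEquiv.mul_apply, totalDegree_conj_act]
  exact fun t => hsize ▸ hs t

/-- The elements of degree at most one in every coordinate system that is minimal for the
conjugates of `z`. -/
noncomputable def lowDegree (z : K' ⊗[K] B) : Submodule K' (K' ⊗[K] B) :=
  ⨅ (t : CoordinateSystem K' (K' ⊗[K] B)) (_ : IsMinimal (fun τ : K' ≃ₐ[K] K' => act τ z) t),
    (restrictTotalDegree (Fin 2) K' 1).comap t.toLinearMap

lemma mem_lowDegree {z c : K' ⊗[K] B} :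
    c ∈ lowDegree z ↔ ∀ t : CoordinateSystem K' (K' ⊗[K] B),
      IsMinimal (fun τ : K' ≃ₐ[K] K' => act τ z) t → (t c).totalDegree ≤ 1 := by
  simp [lowDegree, Submodule.mem_iInf, mem_restrictTotalDegree]

lemma act_mem_lowDegree {z c : K' ⊗[K] B} (hc : c ∈ lowDegree z) (σ : K' ≃ₐ[K] K') :
    act σ c ∈ lowDegree z := by
  rw [mem_lowDegree] at hc ⊢
  intro t ht
  have hdeg := totalDegree_conj_act σ⁻¹ t (act σ c)
  rw [← AlgEquiv.mul_apply, ← map_mul, inv_mul_cancel, map_one, AlgEquiv.one_apply] at hdeg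
  exact hdeg ▸ hc _ (isMinimal_conj ht σ⁻¹)

variable [IsGalois K K']

/-- The elements of degree at most one in all coordinate systems minimal for the conjugates of one
coordinate form a Galois-stable space containing nonconstant elements. -/
lemma exists_apply_one_tmul_eq_X_one (s₀ : CoordinateSystem K' (K' ⊗[K] B)) :
    ∃ (b : B) (s : CoordinateSystem K' (K' ⊗[K] B)), s (1 ⊗ₜ[K] b) = X 1 := by
  have : Nonempty (CoordinateSystem K' (K' ⊗[K] B)) := ⟨s₀⟩
  let z := s₀.symm (X 0)
  obtain ⟨s, hs⟩ := exists_isMinimal (R := K') fun τ : K' ≃ₐ[K] K' => act τ z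
  obtain ⟨x, hx⟩ := exists_totalDegree_eq_one_of_isMinimal (isCoordinate_act s₀) hs
  have hx' : x ∉ (1 : Submodule K' (K' ⊗[K] B)) := by
    rw [← totalDegree_eq_zero_iff_mem_one s, hx s hs]
    exact one_ne_zero
  obtain ⟨b, hb, hb'⟩ := exists_one_tmul_mem_notMem (fun σ _ hc => act_mem_lowDegree hc σ)
    (mem_lowDegree.2 fun t ht => (hx t ht).le) hx'
  rw [← totalDegree_eq_zero_iff_mem_one s] at hb'
  have hdeg : (s (1 ⊗ₜ[K] b)).totalDegree = 1 :=
    (mem_lowDegree.1 hb s hs).antisymm (Nat.one_le_iff_ne_zero.2 hb')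
  obtain ⟨s', hs', -⟩ := exists_apply_eq_X_one hdeg
  exact ⟨b, s', hs'⟩

lemma exists_apply_one_tmul_eq_X (s₀ : CoordinateSystem K' (K' ⊗[K] B)) :
    ∃ (b : Fin 2 → B) (s : CoordinateSystem K' (K' ⊗[K] B)), ∀ i, s (1 ⊗ₜ[K] b i) = X i := by
  obtain ⟨b₁, s, hs⟩ := exists_apply_one_tmul_eq_X_one s₀
  obtain ⟨b₀, hb, hb'⟩ := exists_one_tmul_mem_notMem
    (fun σ _ hc => act_mem_triangularSubspace hs σ hc)
    (symm_X_zero_mem_triangularSubspace s) (symm_X_zero_notMem_lineSubspace s)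
  obtain ⟨s', h₀, h₁⟩ := exists_apply_eq_X_zero_of_mem_triangularSubspace hb hb'
  exact ⟨![b₀, b₁], s', Fin.forall_fin_two.2 ⟨h₀, h₁ _ hs⟩⟩

theorem nonempty_coordinateSystem_of_isGalois (s₀ : CoordinateSystem K' (K' ⊗[K] B)) :
    Nonempty (CoordinateSystem K B) := by
  obtain ⟨b, s, hs⟩ := exists_apply_one_tmul_eq_X s₀
  exact ⟨(AlgEquiv.ofBijective _ (bijective_aeval_of_apply_one_tmul_eq_X s hs)).symm⟩

end Forms

/-! ### Fibres -/

section Fibres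

variable {R A : Type*} [CommRing R] [CommRing A] [Algebra R A]

/-- The extension of a coordinate system of `S ⊗ A` to an `S`-algebra `T`. -/
noncomputable def extendScalars {S : Type*} (T : Type*) [CommRing S] [CommRing T] [Algebra R S]
    [Algebra R T] [Algebra S T] [IsScalarTower R S T] (e : CoordinateSystem S (S ⊗[R] A)) :
    CoordinateSystem T (T ⊗[R] A) :=
  ((Algebra.TensorProduct.cancelBaseChange R S T T A).symm.trans
    (Algebra.TensorProduct.congr AlgEquiv.refl e)).trans (algebraTensorAlgEquiv S T)

universe u

/-- Take the splitting field over `κ` of the minimal polynomial of a primitive element of `L`. -/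
lemma exists_isGalois_algHom (k L : Type*) (κ : Type u) [Field k] [Field L] [Field κ] [Algebra k L]
    [FiniteDimensional k L] [Algebra.IsSeparable k L] [Algebra k κ] :
    ∃ (K' : Type u) (_ : Field K') (_ : Algebra κ K') (_ : Algebra k K')
      (_ : IsScalarTower k κ K'), FiniteDimensional κ K' ∧ IsGalois κ K' ∧
        Nonempty (L →ₐ[k] K') := by
  let pb := Field.powerBasisOfFiniteOfSeparable k L
  let f := (minpoly k pb.gen).map (algebraMap k κ)
  have hsep : f.Separable := Polynomial.Separable.map (Algebra.IsSeparable.isSeparable k pb.gen)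
  have hdeg : (f.map (algebraMap κ f.SplittingField)).degree ≠ 0 := by
    rw [Polynomial.degree_map, Polynomial.degree_map]
    exact (minpoly.degree_pos pb.isIntegral_gen).ne'
  obtain ⟨y, hy⟩ := (Polynomial.SplittingField.splits f).exists_eval_eq_zero hdeg
  have hy' : Polynomial.aeval y (minpoly k pb.gen) = 0 := by
    rwa [Polynomial.eval_map_algebraMap, Polynomial.aeval_map_algebraMap] at hy
  exact ⟨f.SplittingField, inferInstance, inferInstance, inferInstance, inferInstance,
    inferInstance, IsGalois.of_separable_splitting_field hsep, ⟨pb.lift y hy'⟩⟩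

variable {k L : Type*} [Field k] [Algebra k R] [Field L] [Algebra k L]

theorem nonempty_coordinateSystem_fibre [FiniteDimensional k L] [Algebra.IsSeparable k L]
    (e : CoordinateSystem (R ⊗[k] L) ((R ⊗[k] L) ⊗[R] A)) (κ : Type*) [Field κ] [Algebra R κ] :
    Nonempty (CoordinateSystem κ (κ ⊗[R] A)) := by
  let : Algebra k κ := Algebra.compHom κ (algebraMap k R)
  have : IsScalarTower k R κ := .of_algebraMap_eq fun _ => rfl
  obtain ⟨K', _, _, _, _, _, _, ⟨j⟩⟩ := exists_isGalois_algHom k L κ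
  let : Algebra R K' := Algebra.compHom K' (algebraMap R κ)
  have : IsScalarTower R κ K' := .of_algebraMap_eq fun _ => rfl
  have : IsScalarTower k R K' := .of_algebraMap_eq fun x => by
    rw [IsScalarTower.algebraMap_apply k κ K', IsScalarTower.algebraMap_apply k R κ,
      ← IsScalarTower.algebraMap_apply R κ K']
  let g : R ⊗[k] L →ₐ[R] K' :=
    Algebra.TensorProduct.lift (Algebra.ofId R K') j fun _ _ => Commute.all _ _
  let : Algebra (R ⊗[k] L) K' := g.toAlgebra
  have : IsScalarTower R (R ⊗[k] L) K' := .of_algebraMap_eq fun r => (g.commutes r).symm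
  exact nonempty_coordinateSystem_of_isGalois
    ((Algebra.TensorProduct.cancelBaseChange R κ K' K' A).trans (extendScalars K' e))

lemma finiteType_of_coordinateSystem (e : CoordinateSystem (R ⊗[k] L) ((R ⊗[k] L) ⊗[R] A)) :
    Algebra.FiniteType R A :=
  have : Algebra.FiniteType (R ⊗[k] L) ((R ⊗[k] L) ⊗[R] A) := .equiv inferInstance e.symm
  .of_finiteType_tensorProduct_of_faithfullyFlat (R ⊗[k] L)

lemma flat_of_coordinateSystem (e : CoordinateSystem (R ⊗[k] L) ((R ⊗[k] L) ⊗[R] A)) :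
    Module.Flat R A :=
  have : Module.Flat (R ⊗[k] L) ((R ⊗[k] L) ⊗[R] A) := .of_linearEquiv e.toLinearEquiv
  .of_flat_tensorProduct R A (R ⊗[k] L)

end Fibres

end AffinePlane

theorem stmt11_general (k : Type*) [Field k]
    (R : Type*) [CommRing R] [Algebra k R]
    (A : Type*) [CommRing A] [Algebra R A]
    (L : Type*) [Field L] [Algebra k L] [FiniteDimensional k L] [Algebra.IsSeparable k L]
    (h : Nonempty (((R ⊗[k] L) ⊗[R] A) ≃ₐ[R ⊗[k] L] MvPolynomial (Fin 2) (R ⊗[k] L))) :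
    (∀ (p : Ideal R) [p.IsPrime],
      Nonempty ((ResidueFieldAt p ⊗[R] A) ≃ₐ[ResidueFieldAt p]
        MvPolynomial (Fin 2) (ResidueFieldAt p))) ∧
    IsA2Fibration R A := by
  obtain ⟨e⟩ := h
  have hfibre (p : Ideal R) [p.IsPrime] :
      Nonempty ((ResidueFieldAt p ⊗[R] A) ≃ₐ[ResidueFieldAt p]
        MvPolynomial (Fin 2) (ResidueFieldAt p)) :=
    AffinePlane.nonempty_coordinateSystem_fibre e (ResidueFieldAt p)
  exact ⟨hfibre, AffinePlane.finiteType_of_coordinateSystem e,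
    AffinePlane.flat_of_coordinateSystem e, hfibre⟩

/-- Let `k` be a field, `R` a Dedekind domain containing `k`, and `A` an `R`-algebra.
Suppose `L` is a finite separable field extension of `k` such that `A ⊗_k L` is a
polynomial ring in two variables over `R ⊗_k L`.  Then every fiber `A ⊗_R κ(p)` is a
polynomial ring in two variables over `κ(p)`; consequently `A` is an `𝔸²`-fibration
over `R`. -/
theorem stmt11 (k : Type*) [Field k]
    (R : Type*) [CommRing R] [IsDomain R] [IsDedekindDomain R] [Algebra k R]
    (A : Type*) [CommRing A] [Algebra R A]
    (L : Type*) [Field L] [Algebra k L] [FiniteDimensional k L] [Algebra.IsSeparable k L]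
    (h : Nonempty (((R ⊗[k] L) ⊗[R] A) ≃ₐ[R ⊗[k] L] MvPolynomial (Fin 2) (R ⊗[k] L))) :
    (∀ (p : Ideal R) [p.IsPrime],
      Nonempty ((ResidueFieldAt p ⊗[R] A) ≃ₐ[ResidueFieldAt p]
        MvPolynomial (Fin 2) (ResidueFieldAt p))) ∧
    IsA2Fibration R A :=
  stmt11_general k R A L h
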